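/- arXiv:0806.3915 — 2 statements merged into one kernel-verified Lean document; each statement's English description precedes it below -/
import Mathlib

section
/- Let Γ be a non-elementary hyperbolic group and μ a symmetric finitely supported probability measure whose support generates Γ, with Green metric d_G. For R > 0 let ∂B_G(w,R) = { x : x ∉ B_G(w,R) and there exists γ ∈ supp(μ) with γ^{-1}(x) ∈ B_G(w,R) } be the exterior sphere, and let ν_R be the law on ∂B_G(w,R) of the first point visited by the random walk outside B_G(w,R). Then there exist positive constants C₁ and C₂ such that for every R > 0 and every x ∈ ∂B_G(w,R) there exists y ∈ B_G(x,C₁) ∩ ∂B_G(w,R) with C₂ e^{−R} ≤ ν_R(y) ≤ e^{−R}; moreover ν_R(y) ≤ e^{−R} holds for every y ∈ ∂B_G(w,R). -/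
open Filter MeasureTheory Topology Metric Set
open scoped ENNReal

noncomputable section

namespace GHM

/-! ### Coarse geometry of distance functions -/

/-- The Gromov product `(x|y)_w` of `x` and `y` seen from `w`, for a distance function `d`. -/
def gromov {X : Type*} (d : X → X → ℝ) (w x y : X) : ℝ :=
  (d x w + d y w - d x y) / 2

/-- `d` is `δ`-hyperbolic (four point condition on Gromov products). -/
def IsHyperbolicWith {X : Type*} (d : X → X → ℝ) (δ : ℝ) : Prop :=
  ∀ w x y z : X, min (gromov d w x y) (gromov d w x z) - δ ≤ gromov d w y z

/-- `d` is Gromov hyperbolic. -/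
def IsHyperbolic {X : Type*} (d : X → X → ℝ) : Prop :=
  ∃ δ : ℝ, 0 ≤ δ ∧ IsHyperbolicWith d δ

/-- `d` is a genuine metric. -/
structure IsMetricFun {X : Type*} (d : X → X → ℝ) : Prop where
  refl : ∀ x, d x x = 0
  pos : ∀ x y, x ≠ y → 0 < d x y
  symm : ∀ x y, d x y = d y x
  triangle : ∀ x y z, d x z ≤ d x y + d y z

/-- `f` is a `(Λ,c)`-quasi-isometric embedding from `(X,dX)` to `(Y,dY)`. -/
def QIEmbed {X Y : Type*} (dX : X → X → ℝ) (dY : Y → Y → ℝ)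
    (f : X → Y) (Λ c : ℝ) : Prop :=
  ∀ x x' : X, dX x x' / Λ - c ≤ dY (f x) (f x') ∧ dY (f x) (f x') ≤ Λ * dX x x' + c

/-- `(X,dX)` and `(Y,dY)` are quasi-isometric. -/
def QuasiIsometric {X Y : Type*} (dX : X → X → ℝ) (dY : Y → Y → ℝ) : Prop :=
  ∃ (f : X → Y) (Λ c C : ℝ), 1 ≤ Λ ∧ 0 ≤ c ∧ 0 ≤ C ∧
    QIEmbed dX dY f Λ c ∧ ∀ y : Y, ∃ x : X, dY (f x) y ≤ C

variable {G : Type*} [Group G]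

/-- Word length of `g` with respect to the (symmetrized) finite set `S`. -/
def wordLength (S : Finset G) (g : G) : ℕ :=
  sInf {n : ℕ | ∃ l : List G, l.length = n ∧ (∀ a ∈ l, a ∈ S ∨ a⁻¹ ∈ S) ∧ l.prod = g}

/-- The word metric associated with a finite generating set `S`. -/
def wordDist (S : Finset G) (x y : G) : ℝ := wordLength S (x⁻¹ * y)

/-- `S` generates the group. -/
def Generates (S : Finset G) : Prop := Subgroup.closure (S : Set G) = ⊤

/-- The standard metric on `ℤ`. -/
def intDist (m n : ℤ) : ℝ := |(m : ℝ) - (n : ℝ)|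

/-- `G` is a non-elementary hyperbolic group: finitely generated, its word metrics are
Gromov hyperbolic, it is infinite, and it is not quasi-isometric to `ℤ`. -/
def NonElemHyperbolic (G : Type*) [Group G] : Prop :=
  Infinite G ∧ (∃ S : Finset G, Generates S) ∧
    ∀ S : Finset G, Generates S →
      IsHyperbolic (wordDist S) ∧ ¬ QuasiIsometric (wordDist S) intDist

/-- `d` is invariant under left translations. -/
def LeftInvariant (d : G → G → ℝ) : Prop := ∀ g x y : G, d (g * x) (g * y) = d x y

/-- `d` belongs to the class `𝒟(Γ)`: it is a left-invariant Gromov hyperbolic metric on the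
group, quasi-isometric to a word metric of a finite generating set. -/
def MemD (d : G → G → ℝ) : Prop :=
  IsMetricFun d ∧ LeftInvariant d ∧ IsHyperbolic d ∧
    ∃ S : Finset G, Generates S ∧ QuasiIsometric d (wordDist S)

/-! ### Random walks -/

/-- `μ` is (the density of) a probability measure on the (countable) group. -/
def IsProbDensity (μ : G → ℝ) : Prop := (∀ g, 0 ≤ μ g) ∧ HasSum μ 1

/-- `μ` is symmetric. -/
def IsSymmetric (μ : G → ℝ) : Prop := ∀ g : G, μ g⁻¹ = μ g

/-- The support of `μ` generates `G`. -/
def GeneratesSupp (μ : G → ℝ) : Prop := Subgroup.closure {g : G | μ g ≠ 0} = ⊤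

open scoped Classical in
/-- Convolution powers `μ^n` of `μ`. -/
def convPow (μ : G → ℝ) : ℕ → G → ℝ
  | 0 => fun g => if g = 1 then 1 else 0
  | n + 1 => fun g => ∑' y : G, convPow μ n y * μ (y⁻¹ * g)

/-- The Green function `G(x,y) = ∑_n μ^n(x⁻¹y)`. -/
def greenFn (μ : G → ℝ) (x y : G) : ℝ := ∑' n : ℕ, convPow μ n (x⁻¹ * y)

/-- The random walk is transient, i.e. `G(e,e) = ∑_n μ^n(e) < ∞`. -/
def Transient (μ : G → ℝ) : Prop := Summable fun n : ℕ => convPow μ n (1 : G)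

/-- Successive positions of a walk started at `x` with increments `l`. -/
def walkPositions (x : G) (l : List G) : List G := l.scanl (fun p a => p * a) x

/-- The increments `l` describe a trajectory from `x` which hits `y` for the first time at
its final position. -/
def IsFirstHitPath (x y : G) (l : List G) : Prop :=
  (walkPositions x l).getLast? = some y ∧ y ∉ (walkPositions x l).dropLast

/-- `F(x,y)`: the probability that the `μ`-random walk started at `x` ever hits `y`. -/
def hitProb (μ : G → ℝ) (x y : G) : ℝ :=
  ∑' l : {l : List G // IsFirstHitPath x y l}, ((l : List G).map μ).prod

/-- The Green metric `d_G(x,y) = - log F(x,y)`. -/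
def greenDist (μ : G → ℝ) (x y : G) : ℝ := - Real.log (hitProb μ x y)

/-- `μ` has a finite first moment with respect to `d`. -/
def FiniteFirstMoment (d : G → G → ℝ) (μ : G → ℝ) : Prop :=
  Summable fun g : G => d 1 g * μ g

/-- `μ` has an exponential moment with respect to `d`. -/
def HasExpMoment (d : G → G → ℝ) (μ : G → ℝ) : Prop :=
  ∃ lam : ℝ, 0 < lam ∧ Summable fun g : G => Real.exp (lam * d 1 g) * μ g

/-- The entropy `H(μ^n) = -∑_γ μ^n(γ) log μ^n(γ)` of the `n`-th convolution power. -/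
def entropyAt (μ : G → ℝ) (n : ℕ) : ℝ :=
  - ∑' g : G, convPow μ n g * Real.log (convPow μ n g)

/-- `h` is the asymptotic entropy of the walk. -/
def HasEntropy (μ : G → ℝ) (h : ℝ) : Prop :=
  Tendsto (fun n : ℕ => entropyAt μ n / n) atTop (𝓝 h)

/-- `v` is the logarithmic volume growth of `(G,d)` (seen from the identity). -/
def HasGrowth (d : G → G → ℝ) (v : ℝ) : Prop :=
  Filter.limsup (fun R : ℝ => Real.log (Nat.card {g : G // d 1 g ≤ R}) / R) atTop = v

/-- The position `Z_n = ω_0 ω_1 ⋯ ω_{n-1}` of the random walk at time `n`, given the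
sequence of increments `ω`. -/
def walkPos (n : ℕ) (ω : ℕ → G) : G := ((List.range n).map ω).prod

/-- `P` is the law on the space of increment sequences of an i.i.d. sequence of law `μ`:
cylinders have product measure.  (This characterizes the path measure of the random walk.) -/
def IsWalkMeasure [MeasurableSpace G] (μ : G → ℝ) (P : Measure (ℕ → G)) : Prop :=
  IsProbabilityMeasure P ∧
    ∀ (n : ℕ) (g : Fin n → G),
      P {ω : ℕ → G | ∀ i : Fin n, ω (i : ℕ) = g i} = ∏ i : Fin n, ENNReal.ofReal (μ (g i))

/-! ### The Gromov boundary, visual metrics, harmonic and quasiconformal measures -/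

/-- A sequence tends to infinity if Gromov products (at the base point `1`) go to `∞`. -/
def TendstoInfinity (d : G → G → ℝ) (u : ℕ → G) : Prop :=
  Tendsto (fun p : ℕ × ℕ => gromov d 1 (u p.1) (u p.2)) atTop atTop

/-- A realization of the Gromov boundary of `(G,d)` as an abstract type `B`:
`conv u b` means that the sequence `u` converges at infinity to the boundary point `b`.
The group acts on its boundary by `smul`. -/
structure BoundaryData (G : Type*) [Group G] (d : G → G → ℝ) (B : Type*) where
  conv : (ℕ → G) → B → Prop
  smul : G → B → B
  conv_unique : ∀ u b b', conv u b → conv u b' → b = b'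
  exists_conv : ∀ u, TendstoInfinity d u → ∃ b, conv u b
  conv_tendstoInfinity : ∀ u b, conv u b → TendstoInfinity d u
  conv_iff : ∀ u v b, conv u b →
    (conv v b ↔ Tendsto (fun n => gromov d 1 (u n) (v n)) atTop atTop)
  conv_surj : ∀ b, ∃ u, conv u b
  smul_conv : ∀ (γ : G) (u) (b), conv u b → conv (fun n => γ * u n) (smul γ b)

/-- Asymptotic Gromov product of two sequences. -/
def seqGromov (d : G → G → ℝ) (u v : ℕ → G) : ℝ :=
  Filter.liminf (fun n => gromov d 1 (u n) (v n)) atTop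

/-- The metric of `B` is a visual metric of parameter `ε` (with comparison constant `C`)
for the hyperbolic distance `d` on the group:  `dist(a,b) ≍ exp(-ε (a|b))`. -/
def IsVisualMetric {B : Type*} [MetricSpace B] (d : G → G → ℝ)
    (bd : BoundaryData G d B) (ε C : ℝ) : Prop :=
  0 < ε ∧ 0 < C ∧
    ∀ u v b b', bd.conv u b → bd.conv v b' → b ≠ b' →
      dist b b' ≤ C * Real.exp (-ε * seqGromov d u v) ∧
      Real.exp (-ε * seqGromov d u v) ≤ C * dist b b'

/-- `ν` is the harmonic measure of the random walk of law `μ` on the boundary `B`: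
it is the law of the almost sure limit `Z_∞` of the walk on the boundary. -/
def IsHarmonicMeasure {B : Type*} [MeasurableSpace G] [MeasurableSpace B]
    (d : G → G → ℝ) (bd : BoundaryData G d B) (μ : G → ℝ)
    (P : Measure (ℕ → G)) (ν : Measure B) : Prop :=
  IsWalkMeasure μ P ∧
    ∃ Zinf : (ℕ → G) → B, Measurable Zinf ∧
      (∀ᵐ ω ∂P, bd.conv (fun n => walkPos n ω) (Zinf ω)) ∧ ν = P.map Zinf

/-- Busemann function `β_b(x,y)` of the boundary point `b`. -/
def busemann {B : Type*} (d : G → G → ℝ) (bd : BoundaryData G d B)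
    (x y : G) (b : B) : ℝ :=
  sSup {t : ℝ | ∃ u, bd.conv u b ∧
    t = Filter.limsup (fun n => d x (u n) - d y (u n)) atTop}

/-- The image measure `γ^*ρ`, `γ^*ρ(A) = ρ(γA)`. -/
def actPush {B : Type*} [MeasurableSpace B] {d : G → G → ℝ}
    (bd : BoundaryData G d B) (γ : G) (ρ : Measure B) : Measure B :=
  ρ.map (bd.smul γ⁻¹)

/-- `ρ` is a quasiconformal measure on the boundary for `(G,d)` of logarithmic growth
parameter `v`: `γ^*ρ` and `ρ` are mutually absolutely continuous, with density
`dγ^*ρ/dρ ≍ exp (v β_b(1,γ⁻¹))` (uniformly in `γ`). -/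
def IsQuasiconformalMeasure {B : Type*} [MeasurableSpace B] {d : G → G → ℝ}
    (bd : BoundaryData G d B) (ρ : Measure B) (v : ℝ) : Prop :=
  ∃ C : ℝ, 0 < C ∧ ∀ γ : G,
    actPush bd γ ρ ≪ ρ ∧ ρ ≪ actPush bd γ ρ ∧
      ∀ᵐ b ∂ρ,
        (actPush bd γ ρ).rnDeriv ρ b
            ≤ ENNReal.ofReal (C * Real.exp (v * busemann d bd 1 γ⁻¹ b)) ∧
        ENNReal.ofReal (C⁻¹ * Real.exp (v * busemann d bd 1 γ⁻¹ b))
            ≤ (actPush bd γ ρ).rnDeriv ρ b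

/-- `ν` is Ahlfors regular of dimension `α`: `ν(B(b,r)) ≍ r^α`. -/
def AhlforsRegularOfDim {B : Type*} [MetricSpace B] [MeasurableSpace B]
    (ν : Measure B) (α : ℝ) : Prop :=
  ∃ C : ℝ, 0 < C ∧ ∀ (b : B) (r : ℝ), 0 < r → r ≤ Metric.diam (Set.univ : Set B) →
    ENNReal.ofReal (C⁻¹ * r ^ α) ≤ ν (Metric.ball b r) ∧
      ν (Metric.ball b r) ≤ ENNReal.ofReal (C * r ^ α)

/-- The Hausdorff dimension of a measure: the infimum of the Hausdorff dimensions of sets of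
full measure. -/
def measureDim {B : Type*} [EMetricSpace B] [MeasurableSpace B] (ν : Measure B) : ℝ≥0∞ :=
  ⨅ (A : Set B) (_ : ν Aᶜ = 0), dimH A

/-! ### Word geodesics -/

/-- `p 0, …, p n` is a geodesic segment for the word metric of `S`. -/
def IsWordGeodesic (S : Finset G) (n : ℕ) (p : ℕ → G) : Prop :=
  ∀ i j : ℕ, i ≤ n → j ≤ n → wordDist S (p i) (p j) = |(i : ℝ) - (j : ℝ)|

/-- `v` lies within distance `r` of some word geodesic segment from `x` to `y`. -/
def NearWordGeodesic (S : Finset G) (x y v : G) (r : ℝ) : Prop :=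
  ∃ (n : ℕ) (p : ℕ → G), IsWordGeodesic S n p ∧ p 0 = x ∧ p n = y ∧
    ∃ i ≤ n, wordDist S v (p i) ≤ r

/-! ### Martin boundary -/

/-- The Martin kernel `K(x,y) = G(x,y)/G(e,y)`. -/
def martinKernel (μ : G → ℝ) (x y : G) : ℝ := greenFn μ x y / greenFn μ 1 y

/-- The embedding `y ↦ K(·,y)` of the group in `C(G)` (pointwise topology). -/
def martinMap (μ : G → ℝ) (y : G) : G → ℝ := fun x => martinKernel μ x y

/-- The Martin boundary: the boundary of the image of the group under the Martin embedding
in the space of functions with the topology of pointwise convergence. -/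
def martinBoundary (μ : G → ℝ) : Set (G → ℝ) :=
  closure (Set.range (martinMap μ)) \ Set.range (martinMap μ)

/-- `h` is a `μ`-harmonic function. -/
def IsHarmonicFn (μ : G → ℝ) (h : G → ℝ) : Prop :=
  ∀ x : G, h x = ∑' y : G, h y * μ (x⁻¹ * y)

/-- `h` is a minimal positive harmonic function. -/
def IsMinimalHarmonic (μ : G → ℝ) (h : G → ℝ) : Prop :=
  IsHarmonicFn μ h ∧ (∀ x, 0 < h x) ∧
    ∀ u : G → ℝ, IsHarmonicFn μ u → (∀ x, 0 ≤ u x) → (∀ x, u x ≤ h x) →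
      ∃ c : ℝ, u = fun x => c * h x

/-! ### Metric space versions (geodesic and quasiruled spaces) -/

/-- A geodesic metric space. -/
def IsGeodesicSpace (X : Type*) [MetricSpace X] : Prop :=
  ∀ x y : X, ∃ f : ℝ → X, f 0 = x ∧ f (dist x y) = y ∧
    ∀ s ∈ Set.Icc (0:ℝ) (dist x y), ∀ t ∈ Set.Icc (0:ℝ) (dist x y),
      dist (f s) (f t) = |s - t|

/-- `f : [a,b] → Y` is a `(Λ,c)`-quasigeodesic segment. -/
def IsQuasigeodesicOn {Y : Type*} [MetricSpace Y] (f : ℝ → Y) (a b Λ c : ℝ) : Prop :=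
  ∀ s ∈ Set.Icc a b, ∀ t ∈ Set.Icc a b,
    |s - t| / Λ - c ≤ dist (f s) (f t) ∧ dist (f s) (f t) ≤ Λ * |s - t| + c

/-- `f : [a,b] → Y` is a `τ`-quasiruler: Gromov products of triples along it are `≤ τ`. -/
def IsQuasirulerOn {Y : Type*} [MetricSpace Y] (f : ℝ → Y) (a b τ : ℝ) : Prop :=
  ∀ s t u : ℝ, s ∈ Set.Icc a b → t ∈ Set.Icc a b → u ∈ Set.Icc a b → s ≤ t → t ≤ u →
    dist (f s) (f t) + dist (f t) (f u) ≤ dist (f s) (f u) + 2 * τ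

/-- A quasiruled metric space: for some constants `(Λ,c,τ)` every pair of points is joined
by a `(Λ,c)`-quasigeodesic, and every `(Λ,c)`-quasigeodesic is a `τ`-quasiruler. -/
def Quasiruled (Y : Type*) [MetricSpace Y] : Prop :=
  ∃ Λ c τ : ℝ, 1 ≤ Λ ∧ 0 ≤ c ∧ 0 ≤ τ ∧
    (∀ x y : Y, ∃ (a b : ℝ) (f : ℝ → Y), a ≤ b ∧ f a = x ∧ f b = y ∧
      IsQuasigeodesicOn f a b Λ c) ∧
    ∀ (f : ℝ → Y) (a b : ℝ), IsQuasigeodesicOn f a b Λ c → IsQuasirulerOn f a b τ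

/-- A metric space is hyperbolic. -/
def HypSpace (Y : Type*) [MetricSpace Y] : Prop :=
  IsHyperbolic (fun x y : Y => dist x y)

/-- `f` is a quasi-isometry between metric spaces. -/
def MetricQI {X Y : Type*} [MetricSpace X] [MetricSpace Y] (f : X → Y) : Prop :=
  ∃ Λ c C : ℝ, 1 ≤ Λ ∧ 0 ≤ c ∧ 0 ≤ C ∧
    QIEmbed (fun a b : X => dist a b) (fun a b : Y => dist a b) f Λ c ∧
    ∀ y : Y, ∃ x : X, dist (f x) y ≤ C


/-- The exterior sphere of the Green ball `B_G(e,R)`. -/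
def greenSphere (μ : G → ℝ) (R : ℝ) : Set G :=
  {x : G | ¬ greenDist μ 1 x ≤ R ∧ ∃ γ : G, μ γ ≠ 0 ∧ greenDist μ 1 (x * γ⁻¹) ≤ R}

/-- The harmonic measure on the exterior sphere: `exitLaw μ P R y` is the probability that
the first point visited by the walk outside the Green ball `B_G(e,R)` is `y`. -/
def exitLaw [MeasurableSpace G] (μ : G → ℝ) (P : Measure (ℕ → G)) (R : ℝ) (y : G) :
    ℝ≥0∞ :=
  P {ω : ℕ → G | ∃ n : ℕ, (∀ k < n, greenDist μ 1 (walkPos k ω) ≤ R) ∧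
      ¬ greenDist μ 1 (walkPos n ω) ≤ R ∧ walkPos n ω = y}

/-!
Since the walk is symmetric, everything can be expressed through the (symmetric) Green
functions `G_A` of the walk killed when it leaves `A`. Exiting the ball `B` of radius `R` at `y` is
one way of hitting `y`, so that `ν_R(y) = G_B(1, y) ≤ F(1, y) < e⁻ᴿ`.

For the lower bound it is enough to find, at bounded distance from the given point of the sphere, a
point `z` with `G(1, z) ≥ 2 e⁻ᴿ G(1, 1)`. Outside `B` the function `G(·, 1)` is at most
`e⁻ᴿ G(1, 1)`, hence at most half of `G(z, 1)` comes from paths leaving `B`, so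
`G_B(1, z) = G_B(z, 1) ≥ e⁻ᴿ`; following a geodesic from `z` until it leaves `B` costs a bounded
factor.

To find `z` near a point `x`, note first that a hyperbolic group not quasi-isometric to `ℤ`
branches, and that branching forces a Poincaré inequality for finitely supported functions, so
return probabilities decay exponentially. Consequently a path is unlikely to make a long detour.
Take the points at distances `2 ^ j` from `x` on a geodesic from `1`, and balls around them of
radius linear in `j`: a path avoiding one of these balls has at least `4 ^ j` steps, which happens
with a probability far smaller than the Green function at distance `2 ^ j`. Summed over the scales,
the error is at most half of `G(1, x)`, so the other half passes through a ball at a fixed scale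
`j`. There the Green function to `x` is tiny compared with the inverse volume of the ball, so some
`z` in it has `G(1, z) ≥ 2 G(1, x)`.
-/

section WordMetric

variable {S : Finset G}

lemma Generates.exists_list (hS : Generates S) (g : G) :
    ∃ l : List G, l.length = wordLength S g ∧ (∀ a ∈ l, a ∈ S ∨ a⁻¹ ∈ S) ∧ l.prod = g := by
  have hg : g ∈ (Subgroup.closure (S : Set G)).toSubmonoid :=
    (show Subgroup.closure (S : Set G) = ⊤ from hS) ▸ Subgroup.mem_top g
  rw [Subgroup.closure_toSubmonoid] at hg
  obtain ⟨l, hl, hprod⟩ := Submonoid.exists_list_of_mem_closure hg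
  exact Nat.sInf_mem (s := {n | ∃ l : List G, l.length = n ∧ (∀ a ∈ l, a ∈ S ∨ a⁻¹ ∈ S) ∧
    l.prod = g}) ⟨l.length, l, rfl, by simpa using hl, hprod⟩

lemma wordLength_prod_le {l : List G} (hl : ∀ a ∈ l, a ∈ S ∨ a⁻¹ ∈ S) :
    wordLength S l.prod ≤ l.length := Nat.sInf_le ⟨l, rfl, hl, rfl⟩

@[simp]
lemma wordLength_one (S : Finset G) : wordLength S 1 = 0 :=
  Nat.le_zero.1 (wordLength_prod_le (S := S) (l := []) (by simp))

lemma wordLength_le_one_of_mem {s : G} (hs : s ∈ S) : wordLength S s ≤ 1 := by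
  simpa using wordLength_prod_le (S := S) (l := [s]) (by simp [hs])

lemma wordLength_mul_le (hS : Generates S) (g h : G) :
    wordLength S (g * h) ≤ wordLength S g + wordLength S h := by
  obtain ⟨l, hl, hlS, rfl⟩ := hS.exists_list g
  obtain ⟨k, hk, hkS, rfl⟩ := hS.exists_list h
  rw [← List.prod_append, ← hl, ← hk, ← List.length_append]
  exact wordLength_prod_le fun a ha => (List.mem_append.1 ha).elim (hlS a) (hkS a)

lemma wordLength_inv (hS : Generates S) (g : G) : wordLength S g⁻¹ = wordLength S g := by
  have inv_le (g : G) : wordLength S g⁻¹ ≤ wordLength S g := by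
    obtain ⟨l, hl, hlS, rfl⟩ := hS.exists_list g
    have hinv : ∀ a ∈ (l.map (·⁻¹)).reverse, a ∈ S ∨ a⁻¹ ∈ S := by
      simpa [or_comm] using fun a ha => hlS a⁻¹ ha
    simpa [List.prod_inv_reverse, hl] using wordLength_prod_le hinv
  exact le_antisymm (inv_le g) (by simpa using inv_le g⁻¹)

lemma wordLength_inv_mul_comm (hS : Generates S) (x y : G) :
    wordLength S (x⁻¹ * y) = wordLength S (y⁻¹ * x) := by
  rw [← wordLength_inv hS, mul_inv_rev, inv_inv]

lemma wordLength_inv_mul_triangle (hS : Generates S) (x y z : G) :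
    wordLength S (x⁻¹ * z) ≤ wordLength S (x⁻¹ * y) + wordLength S (y⁻¹ * z) := by
  have h := wordLength_mul_le hS (x⁻¹ * y) (y⁻¹ * z)
  rwa [mul_assoc, mul_inv_cancel_left] at h

/-- `p 0, …, p n` is a geodesic segment for the word metric of `S`. This is `IsWordGeodesic`
with natural number lengths and ordered times. -/
def IsNatGeodesic (S : Finset G) (n : ℕ) (p : ℕ → G) : Prop :=
  ∀ ⦃i j⦄, i ≤ j → j ≤ n → wordLength S ((p i)⁻¹ * p j) = j - i

lemma exists_isNatGeodesic (hS : Generates S) (g : G) :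
    ∃ p : ℕ → G, p 0 = 1 ∧ p (wordLength S g) = g ∧ IsNatGeodesic S (wordLength S g) p := by
  obtain ⟨l, hl, hlS, hprod⟩ := hS.exists_list g
  set p : ℕ → G := fun k => (l.take k).prod with hp
  have p_zero : p 0 = 1 := by simp [hp]
  have p_last : p (wordLength S g) = g := by simp [hp, ← hl, hprod]
  have upper {i j : ℕ} (hij : i ≤ j) (hj : j ≤ wordLength S g) :
      wordLength S ((p i)⁻¹ * p j) ≤ j - i := by
    have hprod_drop : (p i)⁻¹ * p j = ((l.take j).drop i).prod := by
      rw [inv_mul_eq_iff_eq_mul]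
      simp only [hp]
      rw [← min_eq_left hij, ← List.take_take, min_eq_left hij, ← List.prod_append,
        List.take_append_drop]
    rw [hprod_drop]
    refine (wordLength_prod_le fun a ha =>
      hlS a (List.mem_of_mem_take (List.mem_of_mem_drop ha))).trans ?_
    rw [List.length_drop, List.length_take]
    omega
  refine ⟨p, p_zero, p_last, fun i j hij hj => ?_⟩
  -- The three segments `[0,i]`, `[i,j]`, `[j,|g|]` have total length at least `|g|`, so none of
  -- the three upper bounds can be strict.
  have seg₁ := upper (Nat.zero_le i) (hij.trans hj)
  have seg₂ := upper hij hj
  have seg₃ := upper hj le_rfl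
  have tri₁ := wordLength_inv_mul_triangle hS (p 0) (p i) (p (wordLength S g))
  have tri₂ := wordLength_inv_mul_triangle hS (p i) (p j) (p (wordLength S g))
  rw [show (p 0)⁻¹ * p (wordLength S g) = g by rw [p_zero, p_last, inv_one, one_mul]] at tri₁
  omega

lemma exists_wordLength_eq_of_le (hS : Generates S) (g : G) {k : ℕ} (hk : k ≤ wordLength S g) :
    ∃ h, wordLength S h = k ∧ wordLength S (h⁻¹ * g) = wordLength S g - k := by
  obtain ⟨p, p_zero, p_last, hp⟩ := exists_isNatGeodesic hS g
  refine ⟨p k, ?_, ?_⟩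
  · simpa [p_zero] using hp (Nat.zero_le k) hk
  · simpa [p_last] using hp hk le_rfl

open scoped Pointwise in
lemma exists_finset_wordBall (hS : Generates S) :
    ∃ V : ℕ, 1 ≤ V ∧ ∀ n, ∃ B : Finset G, (∀ g, g ∈ B ↔ wordLength S g ≤ n) ∧
      B.card ≤ V ^ n := by
  classical
  set T : Finset G := insert 1 (S ∪ S⁻¹)
  have one_mem : (1 : G) ∈ T := Finset.mem_insert_self _ _
  have mem_T {a : G} : a ∈ T ↔ a = 1 ∨ a ∈ S ∨ a⁻¹ ∈ S := by simp [T]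
  have prod_mem (l : List G) (hl : ∀ a ∈ l, a ∈ S ∨ a⁻¹ ∈ S) : l.prod ∈ T ^ l.length := by
    induction l with
    | nil => simp
    | cons a l ih =>
      simp only [List.forall_mem_cons] at hl
      rw [List.prod_cons, List.length_cons, pow_succ']
      exact Finset.mul_mem_mul (mem_T.2 (.inr hl.1)) (ih hl.2)
  refine ⟨T.card, Finset.card_pos.2 ⟨1, one_mem⟩, fun n => ⟨T ^ n, fun g => ⟨?_, ?_⟩,
    Finset.card_pow_le⟩⟩
  · induction n generalizing g with
    | zero => simp +contextual
    | succ n ih =>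
      rw [pow_succ, Finset.mem_mul]
      rintro ⟨a, ha, b, hb, rfl⟩
      refine (wordLength_mul_le hS a b).trans (add_le_add (ih a ha) ?_)
      rcases mem_T.1 hb with rfl | hb | hb
      · simp
      · exact wordLength_le_one_of_mem hb
      · exact wordLength_inv hS b ▸ wordLength_le_one_of_mem hb
  · intro hg
    obtain ⟨l, hl, hlS, rfl⟩ := hS.exists_list g
    exact Finset.pow_subset_pow_right one_mem (hl ▸ hg) (prod_mem l hlS)

lemma finite_wordBall (hS : Generates S) (n : ℕ) : {g : G | wordLength S g ≤ n}.Finite := by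
  obtain ⟨V, -, hball⟩ := exists_finset_wordBall hS
  obtain ⟨B, hB, -⟩ := hball n
  exact B.finite_toSet.subset fun g hg => (hB g).2 hg

end WordMetric

section Hyperbolicity

lemma IsHyperbolicWith.le_gromov {X : Type*} {d : X → X → ℝ} {δ a : ℝ} {w x y z : X}
    (hδ : IsHyperbolicWith d δ) (hxy : a ≤ gromov d w x y) (hxz : a ≤ gromov d w x z) :
    a - δ ≤ gromov d w y z :=
  (sub_le_sub_right (le_min hxy hxz) δ).trans (hδ w x y z)

lemma IsHyperbolicWith.gromov_le_or {X : Type*} {d : X → X → ℝ} {δ c : ℝ} {w y z : X}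
    (hδ : IsHyperbolicWith d δ) (hyz : gromov d w y z ≤ c) (x : X) :
    gromov d w x y ≤ c + δ ∨ gromov d w x z ≤ c + δ := by
  rw [← min_le_iff]
  linarith [hδ w x y z]

lemma IsHyperbolicWith.nonneg {X : Type*} [Nonempty X] {d : X → X → ℝ} {δ : ℝ}
    (hδ : IsHyperbolicWith d δ) : 0 ≤ δ := by
  obtain ⟨w⟩ := ‹Nonempty X›
  linarith [hδ.le_gromov (le_refl (gromov d w w w)) le_rfl]

/-- The Gromov product `(x|y)` in the word metric of `S`, seen from the identity. -/
abbrev wordGromov (S : Finset G) (x y : G) : ℝ := gromov (wordDist S) 1 x y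

variable {S : Finset G}

lemma wordGromov_eq (hS : Generates S) (x y : G) :
    wordGromov S x y = ((wordLength S x : ℝ) + wordLength S y - wordLength S (x⁻¹ * y)) / 2 := by
  simp only [gromov, wordDist, mul_one, wordLength_inv hS]

lemma wordGromov_comm (hS : Generates S) (x y : G) : wordGromov S x y = wordGromov S y x := by
  rw [wordGromov_eq hS, wordGromov_eq hS, wordLength_inv_mul_comm hS, add_comm]

lemma wordGromov_le_left (hS : Generates S) (x y : G) : wordGromov S x y ≤ wordLength S x := by
  rw [wordGromov_eq hS]
  have h : wordLength S y ≤ wordLength S x + wordLength S (x⁻¹ * y) := by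
    simpa using wordLength_mul_le hS x (x⁻¹ * y)
  have h : (wordLength S y : ℝ) ≤ wordLength S x + wordLength S (x⁻¹ * y) := mod_cast h
  linarith

lemma wordLength_mul_eq_sub_wordGromov (hS : Generates S) (a x : G) :
    (wordLength S (a * x) : ℝ) =
      wordLength S a + wordLength S x - 2 * wordGromov S x a⁻¹ := by
  rw [wordGromov_comm hS, wordGromov_eq hS, inv_inv, wordLength_inv hS]
  ring

lemma wordGromov_mul_self (hS : Generates S) (a x : G) :
    wordGromov S (a * x) a = wordLength S a - wordGromov S x a⁻¹ := by
  rw [wordGromov_comm hS, wordGromov_eq hS, inv_mul_cancel_left,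
    wordLength_mul_eq_sub_wordGromov hS]
  ring

lemma wordGromov_mul_mul_le (hS : Generates S) (a x y : G) :
    wordGromov S (a * x) (a * y) ≤ wordLength S a + wordGromov S x y := by
  rw [wordGromov_eq hS, wordGromov_eq hS, mul_inv_rev, mul_assoc, inv_mul_cancel_left]
  have hx : (wordLength S (a * x) : ℝ) ≤ wordLength S a + wordLength S x :=
    mod_cast wordLength_mul_le hS a x
  have hy : (wordLength S (a * y) : ℝ) ≤ wordLength S a + wordLength S y :=
    mod_cast wordLength_mul_le hS a y
  linarith

lemma exists_truncation (hS : Generates S) (x : G) {k : ℕ} (hk : k ≤ wordLength S x) :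
    ∃ h, wordLength S h = k ∧ wordGromov S x h = k ∧
      ∀ y, wordGromov S h y ≤ wordGromov S x y := by
  obtain ⟨h, hlen, hrest⟩ := exists_wordLength_eq_of_le hS x hk
  have hrest' : (wordLength S (x⁻¹ * h) : ℝ) = wordLength S x - k := by
    rw [wordLength_inv_mul_comm hS, hrest, Nat.cast_sub hk]
  refine ⟨h, hlen, ?_, fun y => ?_⟩
  · rw [wordGromov_eq hS, hrest', hlen]
    ring
  · have tri : (wordLength S (x⁻¹ * y) : ℝ) ≤ wordLength S (x⁻¹ * h) + wordLength S (h⁻¹ * y) :=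
      mod_cast wordLength_inv_mul_triangle hS x h y
    rw [wordGromov_eq hS, wordGromov_eq hS, hlen]
    linarith

end Hyperbolicity

section Branching

variable {S : Finset G}

/-- `γ` is a bi-infinite geodesic for the word metric of `S`. -/
def IsWordLine (S : Finset G) (γ : ℤ → G) : Prop :=
  ∀ i j, wordLength S ((γ i)⁻¹ * γ j) = (i - j).natAbs

lemma exists_wordLength_eq [Infinite G] (hS : Generates S) (n : ℕ) :
    ∃ g, wordLength S g = n := by
  obtain ⟨g, hg⟩ := (finite_wordBall hS n).exists_notMem
  obtain ⟨h, hh, -⟩ := exists_wordLength_eq_of_le hS g (not_le.1 hg).le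
  exact ⟨h, hh⟩

lemma exists_centered_geodesic [Infinite G] (hS : Generates S) (n : ℕ) :
    ∃ γ : ℤ → G, γ 0 = 1 ∧ ∀ i j : ℤ, i.natAbs ≤ n → j.natAbs ≤ n →
      wordLength S ((γ i)⁻¹ * γ j) = (i - j).natAbs := by
  obtain ⟨g, hg⟩ := exists_wordLength_eq hS (2 * n)
  obtain ⟨p, -, -, hp⟩ := exists_isNatGeodesic hS g
  rw [hg] at hp
  refine ⟨fun k => (p n)⁻¹ * p (n + k).toNat, by simp, fun i j hi hj => ?_⟩
  rw [mul_inv_rev, inv_inv, mul_assoc, mul_inv_cancel_left]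
  rcases le_total i j with hij | hji
  · rw [hp (by omega) (by omega)]
    omega
  · rw [wordLength_inv_mul_comm hS, hp (by omega) (by omega)]
    omega

/-- Balls being finite, centered geodesic segments of growing length converge along an
ultrafilter. -/
lemma exists_isWordLine [Infinite G] (hS : Generates S) :
    ∃ γ : ℤ → G, IsWordLine S γ := by
  choose γ hγ_zero hγ using exists_centered_geodesic (S := S) hS
  have eventually_ge (m : ℕ) : ∀ᶠ n in (hyperfilter ℕ : Filter ℕ), m ≤ n :=
    Nat.hyperfilter_le_atTop (eventually_ge_atTop m)
  have limit (k : ℤ) : ∃ v, ∀ᶠ n in (hyperfilter ℕ : Filter ℕ), γ n k = v := by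
    have in_ball : ∀ᶠ n in (hyperfilter ℕ : Filter ℕ),
        ∃ v ∈ {g : G | wordLength S g ≤ k.natAbs}, γ n k = v := by
      filter_upwards [eventually_ge k.natAbs] with n hn
      refine ⟨_, ?_, rfl⟩
      simpa [hγ_zero] using (hγ n 0 k (Nat.zero_le n) hn).le
    obtain ⟨v, -, hv⟩ :=
      (Ultrafilter.eventually_exists_mem_iff (finite_wordBall hS k.natAbs)).1 in_ball
    exact ⟨v, hv⟩
  choose γ' hγ' using limit
  refine ⟨γ', fun i j => ?_⟩
  obtain ⟨n, ⟨hi, hj⟩, hn⟩ :=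
    (((hγ' i).and (hγ' j)).and (eventually_ge (i.natAbs + j.natAbs))).exists
  rw [← hi, ← hj]
  exact hγ n i j (by omega) (by omega)

lemma wordDist_comm (hS : Generates S) (x y : G) : wordDist S x y = wordDist S y x := by
  rw [wordDist, wordDist, wordLength_inv_mul_comm hS]

lemma wordDist_triangle (hS : Generates S) (x y z : G) :
    wordDist S x z ≤ wordDist S x y + wordDist S y z := by
  simp only [wordDist]
  exact_mod_cast wordLength_inv_mul_triangle hS x y z

/-- If every point were close to the line, nearest point projection would be a quasi-isometry
onto `ℤ`. -/
lemma IsWordLine.exists_far_point {γ : ℤ → G} (hS : Generates S) (hγ : IsWordLine S γ)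
    (hℤ : ¬ QuasiIsometric (wordDist S) intDist) (L : ℕ) :
    ∃ x, ∀ n, L ≤ wordLength S (x⁻¹ * γ n) := by
  by_contra! hnear
  choose f hf using hnear
  have hf_near (x : G) : wordDist S x (γ (f x)) ≤ L := by
    simp only [wordDist]
    exact_mod_cast (hf x).le
  have hγ_dist (i j : ℤ) : intDist i j = wordDist S (γ i) (γ j) := by
    rw [wordDist, hγ, intDist, Nat.cast_natAbs]
    push_cast
    rfl
  refine hℤ ⟨f, 1, 2 * L, L, le_rfl, by positivity, by positivity, fun x y => ?_, fun n => ?_⟩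
  · rw [hγ_dist]
    have hx := hf_near x
    have hy := hf_near y
    have tri₁ := wordDist_triangle hS x (γ (f x)) y
    have tri₂ := wordDist_triangle hS (γ (f x)) (γ (f y)) y
    have tri₃ := wordDist_triangle hS (γ (f x)) x (γ (f y))
    have tri₄ := wordDist_triangle hS x y (γ (f y))
    rw [wordDist_comm hS (γ (f y)) y] at tri₂
    rw [wordDist_comm hS (γ (f x)) x] at tri₃
    constructor <;> linarith
  · refine ⟨γ n, ?_⟩
    rw [hγ_dist, wordDist_comm hS]
    exact hf_near _

lemma IsWordLine.exists_translate {γ : ℤ → G} (hγ : IsWordLine S γ) (hS : Generates S)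
    {L : ℕ} {x : G} (hx : ∀ n, L ≤ wordLength S (x⁻¹ * γ n)) :
    ∃ (r : ℤ → G) (z : G), IsWordLine S r ∧ r 0 = 1 ∧ L ≤ wordLength S z ∧
      ∀ n, wordLength S z ≤ wordLength S (z⁻¹ * r n) := by
  obtain ⟨n₀, hn₀⟩ : ∃ n₀, ∀ n, wordLength S (x⁻¹ * γ n₀) ≤ wordLength S (x⁻¹ * γ n) :=
    ⟨_, fun n => Function.argmin_le (fun n => wordLength S (x⁻¹ * γ n)) n⟩
  have z_len : wordLength S ((γ n₀)⁻¹ * x) = wordLength S (x⁻¹ * γ n₀) :=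
    wordLength_inv_mul_comm hS _ _
  refine ⟨fun k => (γ n₀)⁻¹ * γ (n₀ + k), (γ n₀)⁻¹ * x, fun i j => ?_, by simp,
    z_len ▸ hx n₀, fun n => ?_⟩
  · rw [mul_inv_rev, inv_inv, mul_assoc, mul_inv_cancel_left, hγ, add_sub_add_left_eq_sub]
  · rw [z_len, mul_inv_rev, inv_inv, mul_assoc, mul_inv_cancel_left]
    exact hn₀ _

lemma wordGromov_ray_le {δ : ℝ} {x : G} {r : ℕ → G} (hS : Generates S)
    (hδ : IsHyperbolicWith (wordDist S) δ) (hr_zero : r 0 = 1)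
    (hr : ∀ n, IsNatGeodesic S n r) (hx : ∀ k, wordLength S x ≤ wordLength S (x⁻¹ * r k))
    (t : ℕ) : wordGromov S x (r t) ≤ 2 * δ + 1 := by
  have r_len (k : ℕ) : wordLength S (r k) = k := by
    simpa [hr_zero] using hr k (Nat.zero_le k) le_rfl
  have hδ₀ := hδ.nonneg
  set s := wordGromov S x (r t)
  rcases lt_or_ge s 0 with hneg | hnonneg
  · linarith
  have hst : s ≤ t := by
    calc s = wordGromov S (r t) x := wordGromov_comm hS _ _
      _ ≤ wordLength S (r t) := wordGromov_le_left hS _ _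
      _ = t := by rw [r_len]
  -- Compare `x` with the point of the ray at distance `⌊s⌋`.
  have floor_le : (⌊s⌋₊ : ℝ) ≤ s := Nat.floor_le hnonneg
  have lt_floor : s < ⌊s⌋₊ + 1 := Nat.lt_floor_add_one s
  have hkt : ⌊s⌋₊ ≤ t := mod_cast floor_le.trans hst
  have along_ray : wordGromov S (r t) (r ⌊s⌋₊) = ⌊s⌋₊ := by
    rw [wordGromov_comm hS, wordGromov_eq hS, r_len, r_len, hr t hkt le_rfl, Nat.cast_sub hkt]
    ring
  have hyp := hδ.le_gromov (floor_le.trans_eq (wordGromov_comm hS x (r t))) along_ray.ge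
  rw [show gromov (wordDist S) 1 x (r ⌊s⌋₊) = _ from wordGromov_eq hS _ _, r_len] at hyp
  have hxk : (wordLength S x : ℝ) ≤ wordLength S (x⁻¹ * r ⌊s⌋₊) := mod_cast hx ⌊s⌋₊
  linarith

lemma exists_tripod [Infinite G] {δ : ℝ} (hS : Generates S)
    (hδ : IsHyperbolicWith (wordDist S) δ) (hℤ : ¬ QuasiIsometric (wordDist S) intDist) (L : ℕ) :
    ∃ a : Fin 3 → G, (∀ i, wordLength S (a i) = L) ∧
      Pairwise fun i j => wordGromov S (a i) (a j) ≤ 2 * δ + 1 := by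
  obtain ⟨γ, hγ⟩ := exists_isWordLine hS
  obtain ⟨x, hx⟩ := hγ.exists_far_point hS hℤ L
  obtain ⟨r, z, hr, hr_zero, hz_len, hz⟩ := hγ.exists_translate hS hx
  obtain ⟨y, hy_len, -, hy_le⟩ := exists_truncation hS z hz_len
  have r_len (i : ℤ) : wordLength S (r i) = i.natAbs := by simpa [hr_zero] using hr 0 i
  have forward : wordGromov S y (r L) ≤ 2 * δ + 1 :=
    (hy_le _).trans (wordGromov_ray_le (r := fun k : ℕ => r k) hS hδ hr_zero
      (fun n i j hij _ => by rw [hr]; omega) (fun k => hz k) L)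
  have backward : wordGromov S y (r (-L)) ≤ 2 * δ + 1 :=
    (hy_le _).trans (wordGromov_ray_le (r := fun k : ℕ => r (-k)) hS hδ (by simpa using hr_zero)
      (fun n i j hij _ => by rw [hr]; omega) (fun k => hz (-k)) L)
  have opposite : wordGromov S (r L) (r (-L)) ≤ 2 * δ + 1 := by
    rw [wordGromov_eq hS, r_len, r_len, hr, show ((L : ℤ) - -L).natAbs = 2 * L by omega]
    simp only [Int.natAbs_natCast, Int.natAbs_neg, Nat.cast_mul, Nat.cast_ofNat]
    linarith [hδ.nonneg]
  refine ⟨![r L, r (-L), y], fun i => by fin_cases i <;> simp [r_len, hy_len], ?_⟩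
  have forward' := wordGromov_comm hS y (r L) ▸ forward
  have backward' := wordGromov_comm hS y (r (-L)) ▸ backward
  have opposite' := wordGromov_comm hS (r L) (r (-L)) ▸ opposite
  intro i j hij
  fin_cases i <;> fin_cases j <;> first | exact absurd rfl hij | assumption

lemma exists_two_small_of_tripod {δ c : ℝ} (hS : Generates S)
    (hδ : IsHyperbolicWith (wordDist S) δ) {a : Fin 3 → G}
    (ha : Pairwise fun i j => wordGromov S (a i) (a j) ≤ c) (g : G) :
    ∃ i j, i ≠ j ∧ wordGromov S (a i) g ≤ c + δ ∧ wordGromov S (a j) g ≤ c + δ := by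
  have small_or {i j : Fin 3} (hij : i ≠ j) :
      wordGromov S (a i) g ≤ c + δ ∨ wordGromov S (a j) g ≤ c + δ := by
    simpa only [wordGromov_comm hS g] using hδ.gromov_le_or (ha hij) g
  by_cases h₀ : wordGromov S (a 0) g ≤ c + δ
  · rcases small_or (i := 1) (j := 2) (by decide) with h | h
    · exact ⟨0, 1, by decide, h₀, h⟩
    · exact ⟨0, 2, by decide, h₀, h⟩
  · exact ⟨1, 2, by decide, (small_or (by decide)).resolve_left h₀,
      (small_or (by decide)).resolve_left h₀⟩

/-- Every sphere of radius `l ≥ K` contains `N + 1` points, none of them in the direction of a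
prescribed `g`, whose directions separate before time `K`. -/
def HasBranching (S : Finset G) (c : ℝ) (N K : ℕ) : Prop :=
  ∀ l, K ≤ l → ∀ g : G, ∃ x : Fin (N + 1) → G,
    (∀ j, wordLength S (x j) = l ∧ wordGromov S (x j) g ≤ c) ∧
      Pairwise fun j k => wordGromov S (x j) (x k) ≤ K

lemma HasBranching.beyond {δ : ℝ} {N K L l : ℕ} {a g : G} (hS : Generates S)
    (hδ : IsHyperbolicWith (wordDist S) δ) (hK : HasBranching S (4 * δ + 1) N K)
    (hL : 3 * (4 * δ + 1) < L) (hl : K + L ≤ l) (ha_len : wordLength S a = L)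
    (ha : wordGromov S a g ≤ 3 * δ + 1) :
    ∃ x : Fin (N + 1) → G, (∀ k, wordLength S (x k) = l ∧ wordGromov S (x k) g ≤ 4 * δ + 1 ∧
        2 * (4 * δ + 1) - δ < wordGromov S (x k) a) ∧
      Pairwise fun j k => wordGromov S (x j) (x k) ≤ (K + L : ℕ) := by
  have hδ₀ := hδ.nonneg
  obtain ⟨m, hm⟩ := exists_nat_ge (4 * δ + 1)
  -- Translate by `a` branches that avoid the direction `a⁻¹` pointing back to the origin.
  obtain ⟨x, hx, hx_sep⟩ := hK (l - L + 2 * m) (by omega) a⁻¹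
  have toward_a (k) : (L : ℝ) - (4 * δ + 1) ≤ wordGromov S (a * x k) a := by
    rw [wordGromov_mul_self hS, ha_len]
    linarith [(hx k).2]
  have len_le (k) : l ≤ wordLength S (a * x k) := by
    have h := wordLength_mul_eq_sub_wordGromov hS a (x k)
    rw [ha_len, (hx k).1] at h
    push_cast [Nat.cast_sub (show L ≤ l by omega)] at h
    have : (l : ℝ) ≤ wordLength S (a * x k) := by linarith [(hx k).2]
    exact_mod_cast this
  choose y hy_len hy_eq hy_le using fun k => exists_truncation hS (a * x k) (len_le k)
  refine ⟨y, fun k => ⟨hy_len k, (hy_le k g).trans ?_, ?_⟩, fun p q hpq => ?_⟩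
  · rcases hδ.gromov_le_or ha (a * x k) with h | h
    · linarith [toward_a k, show wordGromov S (a * x k) a ≤ _ from h]
    · linarith
  · have hLl : (L : ℝ) - (4 * δ + 1) ≤ wordGromov S (a * x k) (y k) := by
      have : (L : ℝ) ≤ l := mod_cast (show L ≤ l by omega)
      rw [hy_eq]
      linarith
    linarith [show _ ≤ wordGromov S (y k) a from hδ.le_gromov hLl (toward_a k)]
  · calc wordGromov S (y p) (y q) ≤ wordGromov S (y q) (a * x p) :=
          (hy_le p _).trans_eq (wordGromov_comm hS _ _)
      _ ≤ wordGromov S (a * x q) (a * x p) := hy_le q _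
      _ ≤ wordLength S a + wordGromov S (x q) (x p) := wordGromov_mul_mul_le hS _ _ _
      _ ≤ (K + L : ℕ) := by
          rw [ha_len]
          push_cast
          linarith [hx_sep hpq.symm]

lemma exists_hasBranching [Infinite G] {δ : ℝ} (hS : Generates S)
    (hδ : IsHyperbolicWith (wordDist S) δ) (hℤ : ¬ QuasiIsometric (wordDist S) intDist) (N : ℕ) :
    ∃ K, HasBranching S (4 * δ + 1) N K := by
  have hδ₀ := hδ.nonneg
  induction N with
  | zero =>
    refine ⟨0, fun l _ g => ?_⟩
    obtain ⟨a, ha_len, ha⟩ := exists_tripod hS hδ hℤ l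
    obtain ⟨i, -, -, hi, -⟩ := exists_two_small_of_tripod hS hδ ha g
    exact ⟨fun _ => a i, fun _ => ⟨ha_len i, by linarith⟩,
      fun j k hjk => absurd (Fin.ext (by omega)) hjk⟩
  | succ N ih =>
    obtain ⟨K, hK⟩ := ih
    obtain ⟨L, hL⟩ := exists_nat_gt (3 * (4 * δ + 1))
    refine ⟨K + L, fun l hl g => ?_⟩
    obtain ⟨a, ha_len, ha⟩ := exists_tripod hS hδ hℤ L
    obtain ⟨i, j, hij, hi, hj⟩ := exists_two_small_of_tripod hS hδ ha g
    obtain ⟨x, hx, hx_sep⟩ := hK.beyond hS hδ hL hl (ha_len i) (by linarith)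
    obtain ⟨y, hy, -⟩ := hK.beyond hS hδ hL hl (ha_len j) (by linarith)
    -- `y 0` lies beyond another leg of the tripod than the points `x k`.
    have y_off : wordGromov S (y 0) (a i) ≤ 2 * δ + 1 + δ :=
      (hδ.gromov_le_or (ha hij) (y 0)).resolve_right fun h => by
        linarith [(hy 0).2.2, show wordGromov S (y 0) (a j) ≤ _ from h]
    have cross (k) : wordGromov S (x k) (y 0) ≤ (K + L : ℕ) := by
      rcases hδ.gromov_le_or y_off (x k) with h | h
      · refine h.trans ?_
        push_cast
        linarith [K.cast_nonneg (α := ℝ)]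
      · linarith [(hx k).2.2, show wordGromov S (x k) (a i) ≤ _ from h]
    refine ⟨Fin.cons (y 0) x, Fin.cases ⟨(hy 0).1, (hy 0).2.1⟩ fun k => ⟨(hx k).1, (hx k).2.1⟩, ?_⟩
    intro p q
    refine Fin.cases ?_ (fun p => ?_) p <;> refine Fin.cases ?_ (fun q => ?_) q
    · exact fun h => absurd rfl h
    · exact fun _ => (wordGromov_comm hS _ _).trans_le (cross q)
    · exact fun _ => cross p
    · exact fun h => hx_sep fun hpq => h (congrArg Fin.succ hpq)

end Branching

section SquareSummable

variable {α : Type*} {f g : α → ℝ}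

/-- The square of the `ℓ²` norm of `f`. -/
def normSq (f : α → ℝ) : ℝ := ∑' x, f x ^ 2

/-- The `ℓ²` inner product of `f` and `g`. -/
def innerProd (f g : α → ℝ) : ℝ := ∑' x, f x * g x

lemma normSq_nonneg (f : α → ℝ) : 0 ≤ normSq f := tsum_nonneg fun _ => sq_nonneg _

lemma summable_mul_left (hf : f.HasFiniteSupport) (g : α → ℝ) : Summable fun x => f x * g x :=
  summable_of_hasFiniteSupport (by fun_prop)

lemma summable_mul_right (f : α → ℝ) (hg : g.HasFiniteSupport) : Summable fun x => f x * g x :=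
  summable_of_hasFiniteSupport (by fun_prop)

lemma summable_sq (hf : f.HasFiniteSupport) : Summable fun x => f x ^ 2 := by
  simpa only [sq] using summable_mul_left hf f

lemma hasFiniteSupport_sqrt_sq_add_sq (hf : f.HasFiniteSupport) (hg : g.HasFiniteSupport) :
    (fun x => √(f x ^ 2 + g x ^ 2)).HasFiniteSupport :=
  (hf.union hg).subset fun x hx => by
    by_contra hfg
    simp_all [Function.mem_support]

lemma normSq_sqrt_sq_add_sq (hf : f.HasFiniteSupport) (hg : g.HasFiniteSupport) :
    normSq (fun x => √(f x ^ 2 + g x ^ 2)) = normSq f + normSq g := by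
  rw [normSq, normSq, normSq, ← Summable.tsum_add (summable_sq hf) (summable_sq hg)]
  exact tsum_congr fun x => Real.sq_sqrt (by positivity)

end SquareSummable

section Poincare

variable {S : Finset G} {μ : G → ℝ} {f g : G → ℝ}

open scoped Classical in
/-- A combinatorial form of non-amenability: among the steps `y ↦ y * b`, `b ∈ T`, more than
`2 * M` good ones leave every point `y`, and at most `M` good ones arrive at any point `x`. -/
structure IsExpanding (T : Finset G) (M : ℕ) (good : G → G → Prop) : Prop where
  le_card_leaving : ∀ y, 2 * M + 1 ≤ (T.filter fun b => good y b).card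
  card_arriving_le : ∀ x, (T.filter fun b => good (x * b⁻¹) b).card ≤ M

/-- A good step `b` arriving at `x` has no substantial backtracking, so that `b⁻¹` follows
`x⁻¹` almost to its end. -/
lemma le_wordGromov_inv_inv {l : ℕ} {c : ℝ} {x b : G} (hS : Generates S)
    (hb_len : wordLength S b = l) (hb : wordGromov S b (x * b⁻¹)⁻¹ ≤ c) :
    (l : ℝ) - c ≤ wordGromov S x⁻¹ b⁻¹ := by
  rw [wordGromov_eq hS, hb_len, show b⁻¹ * (x * b⁻¹)⁻¹ = x⁻¹ by group,
    show (x * b⁻¹)⁻¹ = b * x⁻¹ by group] at hb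
  rw [wordGromov_comm hS, wordGromov_eq hS, wordLength_inv hS b, hb_len, inv_inv]
  linarith

lemma exists_isExpanding [Infinite G] {δ : ℝ} (hS : Generates S)
    (hδ : IsHyperbolicWith (wordDist S) δ) (hℤ : ¬ QuasiIsometric (wordDist S) intDist) :
    ∃ T M good, IsExpanding (G := G) T M good := by
  classical
  obtain ⟨R, hR⟩ := exists_nat_ge (2 * (4 * δ + 1) + 2 * δ)
  set B := (finite_wordBall hS R).toFinset
  obtain ⟨K, hK⟩ := exists_hasBranching hS hδ hℤ (2 * B.card)
  set T := (finite_wordBall hS (K + 1)).toFinset.filter fun b => wordLength S b = K + 1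
  have mem_T (b) : b ∈ T ↔ wordLength S b = K + 1 := by
    simp +contextual [T]
  refine ⟨T, B.card, fun y b => wordGromov S b y⁻¹ ≤ 4 * δ + 1, fun y => ?_, fun x => ?_⟩
  · obtain ⟨x, hx, hx_sep⟩ := hK (K + 1) (by omega) y⁻¹
    have x_inj : Function.Injective x := fun j k hjk => by
      by_contra hne
      have : wordGromov S (x j) (x k) ≤ K := hx_sep hne
      rw [hjk, wordGromov_eq hS, (hx k).1, inv_mul_cancel, wordLength_one] at this
      push_cast at this
      linarith
    calc 2 * B.card + 1 = (Finset.univ.image x).card := by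
          rw [Finset.card_image_of_injective _ x_inj, Finset.card_univ, Fintype.card_fin]
      _ ≤ _ := Finset.card_le_card fun b hb => by
          obtain ⟨j, -, rfl⟩ := Finset.mem_image.1 hb
          exact Finset.mem_filter.2 ⟨(mem_T _).2 (hx j).1, (hx j).2⟩
  · rcases (T.filter fun b => wordGromov S b (x * b⁻¹)⁻¹ ≤ 4 * δ + 1).eq_empty_or_nonempty
      with h | ⟨b₀, hb₀⟩
    · rw [h, Finset.card_empty]
      exact Nat.zero_le _
    refine Finset.card_le_card_of_injOn (· * b₀⁻¹) (fun b hb => ?_) fun a _ b _ => mul_right_cancel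
    simp only [Finset.mem_filter, Finset.coe_filter, mem_ofPred_eq, mem_T] at hb hb₀
    have close := hδ.le_gromov (le_wordGromov_inv_inv hS hb.1 hb.2)
      (le_wordGromov_inv_inv hS hb₀.1 hb₀.2)
    rw [show gromov (wordDist S) 1 b⁻¹ b₀⁻¹ = _ from wordGromov_eq hS _ _, wordLength_inv hS,
      wordLength_inv hS, hb.1, hb₀.1, inv_inv] at close
    have : (wordLength S (b * b₀⁻¹) : ℝ) ≤ R := by linarith
    simpa [B] using this

/-- The square of the `ℓ²` norm of the increments of `f` along the steps `x ↦ x * b`. -/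
def incrementSq (b : G) (f : G → ℝ) : ℝ := ∑' x, (f (x * b) - f x) ^ 2

/-- The averaging operator of a walk with steps in `S` of law `μ`. -/
def averaging (μ : G → ℝ) (S : Finset G) (f : G → ℝ) : G → ℝ :=
  fun x => ∑ s ∈ S, μ s * f (x * s)

/-- The Dirichlet energy of `f` for a walk with steps in `S` of law `μ`. -/
def energy (μ : G → ℝ) (S : Finset G) (f : G → ℝ) : ℝ := ∑ s ∈ S, μ s * incrementSq s f

lemma tsum_mul_right_translate (f : G → ℝ) (b : G) : ∑' y, f (y * b) = ∑' y, f y :=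
  (Equiv.mulRight b).tsum_eq f

lemma hasFiniteSupport_translate (hf : f.HasFiniteSupport) (b : G) :
    (fun y => f (y * b)).HasFiniteSupport :=
  hf.fun_comp_of_injective (mul_left_injective b)

lemma summable_incrementSq (hf : f.HasFiniteSupport) (b : G) :
    Summable fun x => (f (x * b) - f x) ^ 2 :=
  summable_sq ((hasFiniteSupport_translate hf b).sub hf)

lemma incrementSq_nonneg (b : G) (f : G → ℝ) : 0 ≤ incrementSq b f :=
  tsum_nonneg fun _ => sq_nonneg _

lemma energy_nonneg (hμ : ∀ g, 0 ≤ μ g) (S : Finset G) (f : G → ℝ) : 0 ≤ energy μ S f :=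
  Finset.sum_nonneg fun s _ => mul_nonneg (hμ s) (incrementSq_nonneg _ _)

lemma hasFiniteSupport_averaging (hf : f.HasFiniteSupport) (μ : G → ℝ) (S : Finset G) :
    (averaging μ S f).HasFiniteSupport :=
  .sum (f := fun s x => μ s * f (x * s))
    (fun s => (hasFiniteSupport_translate hf s).mul_right fun _ => μ s) S

open scoped Classical in
lemma IsExpanding.tsum_arriving_le {T : Finset G} {M : ℕ} {good : G → G → Prop}
    (hT : IsExpanding T M good) (hf : f.HasFiniteSupport) :
    ∑ b ∈ T, ∑' y, (if good y b then f (y * b) ^ 2 else 0) ≤ M * normSq f := by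
  have translate (b : G) : ∑' y, (if good y b then f (y * b) ^ 2 else 0) =
      ∑' x, (if good (x * b⁻¹) b then f x ^ 2 else 0) := by
    rw [← tsum_mul_right_translate (fun x => if good (x * b⁻¹) b then f x ^ 2 else 0) b]
    simp only [mul_inv_cancel_right]
  have summable (b : G) : Summable fun x => if good (x * b⁻¹) b then f x ^ 2 else 0 :=
    .of_nonneg_of_le (fun y => by positivity) (fun y => by split_ifs <;> simp [sq_nonneg])
      (summable_sq hf)
  simp only [translate]
  rw [← Summable.tsum_finsetSum fun b _ => summable b, normSq, ← tsum_mul_left]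
  refine Summable.tsum_le_tsum (fun x => ?_) (summable_sum fun b _ => summable b)
    ((summable_sq hf).mul_left _)
  rw [← Finset.sum_filter, Finset.sum_const, nsmul_eq_mul]
  gcongr
  exact hT.card_arriving_le x

open scoped Classical in
lemma IsExpanding.mul_sq_le {T : Finset G} {M : ℕ} {good : G → G → Prop}
    (hT : IsExpanding T M good) (f : G → ℝ) (y : G) :
    (2 * M + 1 : ℝ) * f y ^ 2 ≤
      ∑ b ∈ T, (2 * (if good y b then f (y * b) ^ 2 else 0) + 2 * (f (y * b) - f y) ^ 2) := by
  calc (2 * M + 1 : ℝ) * f y ^ 2 ≤ ((T.filter fun b => good y b).card : ℝ) * f y ^ 2 := by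
        gcongr
        exact_mod_cast hT.le_card_leaving y
    _ = ∑ b ∈ T, if good y b then f y ^ 2 else 0 := by
        rw [← Finset.sum_filter, Finset.sum_const, nsmul_eq_mul]
    _ ≤ _ := by
        gcongr with b
        split_ifs
        · linarith [sq_nonneg (2 * f (y * b) - f y)]
        · linarith [sq_nonneg (f (y * b) - f y)]

lemma IsExpanding.normSq_le {T : Finset G} {M : ℕ} {good : G → G → Prop}
    (hT : IsExpanding T M good) (hf : f.HasFiniteSupport) :
    normSq f ≤ 2 * ∑ b ∈ T, incrementSq b f := by
  classical
  have summable_good (b : G) : Summable fun y => if good y b then f (y * b) ^ 2 else 0 :=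
    .of_nonneg_of_le (fun y => by positivity) (fun y => by split_ifs <;> simp [sq_nonneg])
      (summable_sq (hasFiniteSupport_translate hf b))
  have summable_term (b : G) := ((summable_good b).mul_left 2).add
    ((summable_incrementSq hf b).mul_left 2)
  have summed : (2 * M + 1 : ℝ) * normSq f ≤
      ∑ b ∈ T, (2 * ∑' y, (if good y b then f (y * b) ^ 2 else 0) + 2 * incrementSq b f) := by
    rw [normSq, ← tsum_mul_left]
    refine (Summable.tsum_le_tsum (hT.mul_sq_le f) ((summable_sq hf).mul_left _)
      (summable_sum fun b _ => summable_term b)).trans_eq ?_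
    rw [Summable.tsum_finsetSum fun b _ => summable_term b]
    refine Finset.sum_congr rfl fun b _ => ?_
    rw [Summable.tsum_add ((summable_good b).mul_left 2) ((summable_incrementSq hf b).mul_left 2),
      tsum_mul_left, tsum_mul_left, incrementSq]
  rw [Finset.sum_add_distrib, ← Finset.mul_sum, ← Finset.mul_sum] at summed
  linarith [hT.tsum_arriving_le hf]

lemma incrementSq_mul_le (b c : G) (hf : f.HasFiniteSupport) :
    incrementSq (b * c) f ≤ 2 * incrementSq b f + 2 * incrementSq c f := by
  have translate : incrementSq c f = ∑' y, (f (y * b * c) - f (y * b)) ^ 2 :=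
    (tsum_mul_right_translate (fun y => (f (y * c) - f y) ^ 2) b).symm
  have summable_b := (summable_incrementSq hf b).mul_left 2
  have summable_c : Summable fun y => 2 * (f (y * b * c) - f (y * b)) ^ 2 :=
    ((Equiv.mulRight b).summable_iff.2 (summable_incrementSq hf c)).mul_left 2
  rw [translate, incrementSq, incrementSq, ← tsum_mul_left, ← tsum_mul_left,
    ← Summable.tsum_add summable_b summable_c]
  refine Summable.tsum_le_tsum (fun y => ?_) (summable_incrementSq hf _)
    (summable_b.add summable_c)
  rw [← mul_assoc]
  linarith [sq_nonneg ((f (y * b) - f y) - (f (y * b * c) - f (y * b)))]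

lemma incrementSq_inv (b : G) (f : G → ℝ) : incrementSq b⁻¹ f = incrementSq b f := by
  rw [incrementSq, incrementSq, ← tsum_mul_right_translate _ b]
  refine tsum_congr fun y => ?_
  rw [mul_inv_cancel_right]
  ring

lemma exists_incrementSq_le_energy (hS : Generates S) (hμ : ∀ g, 0 ≤ μ g)
    (hμS : ∀ s ∈ S, 0 < μ s) (b : G) :
    ∃ K, 0 ≤ K ∧ ∀ f : G → ℝ, f.HasFiniteSupport → incrementSq b f ≤ K * energy μ S f := by
  have hb : b ∈ Subgroup.closure (S : Set G) := by
    rw [show Subgroup.closure (S : Set G) = ⊤ from hS]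
    trivial
  induction hb using Subgroup.closure_induction with
  | mem s hs =>
    refine ⟨(μ s)⁻¹, (inv_pos.2 (hμS s hs)).le, fun f _ => ?_⟩
    rw [le_inv_mul_iff₀ (hμS s hs)]
    exact Finset.single_le_sum (f := fun s => μ s * incrementSq s f)
      (fun s _ => mul_nonneg (hμ s) (incrementSq_nonneg _ _)) hs
  | one => exact ⟨0, le_rfl, fun f _ => by simp [incrementSq]⟩
  | mul b c _ _ hb hc =>
    obtain ⟨K, hK, hb⟩ := hb
    obtain ⟨K', hK', hc⟩ := hc
    refine ⟨2 * K + 2 * K', by positivity, fun f hf => ?_⟩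
    linarith [incrementSq_mul_le b c hf, hb f hf, hc f hf]
  | inv b _ hb => simpa only [incrementSq_inv] using hb

lemma innerProd_averaging (μ : G → ℝ) (S : Finset G) (hf : f.HasFiniteSupport) (g : G → ℝ) :
    innerProd (averaging μ S f) g = ∑ s ∈ S, μ s * ∑' x, f (x * s) * g x := by
  simp only [innerProd, averaging, Finset.sum_mul, mul_assoc]
  rw [Summable.tsum_finsetSum fun s _ =>
    (summable_mul_left (hasFiniteSupport_translate hf s) g).mul_left _]
  simp only [tsum_mul_left]

lemma energy_eq (hμ : ∑ s ∈ S, μ s = 1) (hf : f.HasFiniteSupport) :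
    energy μ S f = 2 * normSq f - 2 * innerProd (averaging μ S f) f := by
  have incrementSq_eq (s : G) : incrementSq s f = 2 * normSq f - 2 * ∑' x, f (x * s) * f x := by
    have summable_translate := summable_sq (hasFiniteSupport_translate hf s)
    calc incrementSq s f = ∑' x, ((f (x * s) ^ 2 + f x ^ 2) - 2 * (f (x * s) * f x)) :=
          tsum_congr fun x => by ring
      _ = (∑' x, f (x * s) ^ 2 + normSq f) - 2 * ∑' x, f (x * s) * f x := by
          rw [Summable.tsum_sub (summable_translate.add (summable_sq hf))
            ((summable_mul_right _ hf).mul_left 2),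
            Summable.tsum_add summable_translate (summable_sq hf), tsum_mul_left, normSq]
      _ = _ := by
          rw [tsum_mul_right_translate (fun x => f x ^ 2), normSq]
          ring
  simp only [energy, incrementSq_eq, innerProd_averaging μ S hf, mul_sub, Finset.sum_sub_distrib,
    ← Finset.sum_mul, hμ, one_mul, Finset.mul_sum, mul_left_comm (2 : ℝ)]

end Poincare

section SpectralGap

variable {S : Finset G} {μ : G → ℝ} {f g : G → ℝ}

lemma exists_spectral_gap [Infinite G] {δ : ℝ} (hS : Generates S)
    (hδ : IsHyperbolicWith (wordDist S) δ) (hℤ : ¬ QuasiIsometric (wordDist S) intDist)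
    (hμ : ∀ g, 0 ≤ μ g) (hμS : ∀ s ∈ S, 0 < μ s) (hμ_sum : ∑ s ∈ S, μ s = 1) :
    ∃ θ : ℝ, 0 < θ ∧ θ < 1 ∧
      ∀ f : G → ℝ, f.HasFiniteSupport → innerProd (averaging μ S f) f ≤ θ * normSq f := by
  obtain ⟨T, M, good, hT⟩ := exists_isExpanding hS hδ hℤ
  choose K K_nonneg hK using exists_incrementSq_le_energy hS hμ hμS
  set A := 1 + 2 * ∑ b ∈ T, K b
  have hA : 1 ≤ A := by linarith [Finset.sum_nonneg (s := T) fun b _ => K_nonneg b]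
  have poincare (f : G → ℝ) (hf : f.HasFiniteSupport) : normSq f ≤ A * energy μ S f := by
    have := Finset.sum_le_sum (s := T) fun b _ => hK b f hf
    rw [← Finset.sum_mul] at this
    linarith [hT.normSq_le hf, energy_nonneg hμ S f,
      show A * energy μ S f = energy μ S f + 2 * ((∑ b ∈ T, K b) * energy μ S f) by ring]
  have gap_pos : 0 < (2 * A)⁻¹ := by positivity
  have gap_lt : (2 * A)⁻¹ < 1 := inv_lt_one_of_one_lt₀ (by linarith)
  refine ⟨1 - (2 * A)⁻¹, by linarith, by linarith, fun f hf => ?_⟩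
  have := poincare f hf
  rw [energy_eq hμ_sum hf] at this
  have : (2 * A)⁻¹ * normSq f ≤ normSq f - innerProd (averaging μ S f) f := by
    rw [inv_mul_le_iff₀ (by positivity)]
    linarith
  linarith

lemma innerProd_averaging_comm (hμ : IsSymmetric μ) (hS : ∀ s, s ∈ S ↔ s⁻¹ ∈ S)
    (hf : f.HasFiniteSupport) (hg : g.HasFiniteSupport) :
    innerProd (averaging μ S f) g = innerProd (averaging μ S g) f := by
  rw [innerProd_averaging μ S hf, innerProd_averaging μ S hg]
  refine Finset.sum_equiv (Equiv.inv G) (fun s => hS s) (fun s _ => ?_)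
  rw [Equiv.inv_apply, hμ s, ← tsum_mul_right_translate (fun x => g (x * s⁻¹) * f x) s]
  simp only [mul_inv_cancel_right, mul_comm]

/-- The Cauchy–Schwarz inequality for the vectors `(f, g)` at neighbouring points bounds the
cross terms by the quadratic form at `√(f ^ 2 + g ^ 2)`. This turns an upper bound on a quadratic
form with nonnegative coefficients into a bound on its polarization. -/
lemma innerProd_averaging_add_le (hμ : ∀ g, 0 ≤ μ g) (S : Finset G) (hf : f.HasFiniteSupport)
    (hg : g.HasFiniteSupport) :
    innerProd (averaging μ S f) g + innerProd (averaging μ S g) f ≤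
      innerProd (averaging μ S fun x => √(f x ^ 2 + g x ^ 2)) fun x => √(f x ^ 2 + g x ^ 2) := by
  have hh := hasFiniteSupport_sqrt_sq_add_sq hf hg
  have summable_fg (s : G) := summable_mul_left (hasFiniteSupport_translate hf s) g
  have summable_gf (s : G) := summable_mul_left (hasFiniteSupport_translate hg s) f
  rw [innerProd_averaging μ S hf, innerProd_averaging μ S hg, innerProd_averaging μ S hh,
    ← Finset.sum_add_distrib]
  gcongr with s
  rw [← mul_add, ← Summable.tsum_add (summable_fg s) (summable_gf s)]
  refine mul_le_mul_of_nonneg_left (Summable.tsum_le_tsum (fun x => ?_)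
    ((summable_fg s).add (summable_gf s)) (summable_mul_right _ hh)) (hμ s)
  rw [← Real.sqrt_mul (by positivity)]
  refine Real.le_sqrt_of_sq_le ?_
  linarith [sq_nonneg (f (x * s) * f x - g (x * s) * g x)]

lemma two_mul_innerProd_averaging_le {θ : ℝ} (hμ : ∀ g, 0 ≤ μ g) (hμ_symm : IsSymmetric μ)
    (hS : ∀ s, s ∈ S ↔ s⁻¹ ∈ S)
    (gap : ∀ f : G → ℝ, f.HasFiniteSupport → innerProd (averaging μ S f) f ≤ θ * normSq f)
    (hf : f.HasFiniteSupport) (hg : g.HasFiniteSupport) :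
    2 * innerProd (averaging μ S f) g ≤ θ * (normSq f + normSq g) := by
  have gap_h := gap _ (hasFiniteSupport_sqrt_sq_add_sq hf hg)
  rw [normSq_sqrt_sq_add_sq hf hg] at gap_h
  linarith [innerProd_averaging_add_le hμ S hf hg, innerProd_averaging_comm hμ_symm hS hf hg]

lemma normSq_averaging_le {θ : ℝ} (hμ : ∀ g, 0 ≤ μ g) (hμ_symm : IsSymmetric μ)
    (hS : ∀ s, s ∈ S ↔ s⁻¹ ∈ S) (hθ : θ < 1)
    (gap : ∀ f : G → ℝ, f.HasFiniteSupport → innerProd (averaging μ S f) f ≤ θ * normSq f)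
    (hf : f.HasFiniteSupport) : normSq (averaging μ S f) ≤ θ * normSq f := by
  have polarized := two_mul_innerProd_averaging_le hμ hμ_symm hS gap hf
    (hasFiniteSupport_averaging hf μ S)
  rw [show innerProd (averaging μ S f) (averaging μ S f) = normSq (averaging μ S f) from
    tsum_congr fun x => (sq _).symm] at polarized
  nlinarith [normSq_nonneg (averaging μ S f)]

/-- `averagingIterate μ S n x` is the probability that the walk started at `x` is at `1` at
time `n`. -/
def averagingIterate (μ : G → ℝ) (S : Finset G) (n : ℕ) : G → ℝ :=
  (averaging μ S)^[n] (Set.indicator {1} 1)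

lemma averagingIterate_succ (μ : G → ℝ) (S : Finset G) (n : ℕ) :
    averagingIterate μ S (n + 1) = averaging μ S (averagingIterate μ S n) :=
  Function.iterate_succ_apply' _ _ _

lemma hasFiniteSupport_averagingIterate (μ : G → ℝ) (S : Finset G) (n : ℕ) :
    (averagingIterate μ S n).HasFiniteSupport := by
  induction n with
  | zero => exact (Set.finite_singleton (1 : G)).subset Set.support_indicator_subset
  | succ n ih =>
    rw [averagingIterate_succ]
    exact hasFiniteSupport_averaging ih μ S

lemma exists_averagingIterate_le_pow [Infinite G] {δ : ℝ} (hS : Generates S)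
    (hδ : IsHyperbolicWith (wordDist S) δ) (hℤ : ¬ QuasiIsometric (wordDist S) intDist)
    (hS_inv : ∀ s, s ∈ S ↔ s⁻¹ ∈ S) (hμ : ∀ g, 0 ≤ μ g) (hμ_symm : IsSymmetric μ)
    (hμS : ∀ s ∈ S, 0 < μ s) (hμ_sum : ∑ s ∈ S, μ s = 1) :
    ∃ ρ : ℝ, 0 < ρ ∧ ρ < 1 ∧ ∀ n g, averagingIterate μ S n g ≤ ρ ^ n := by
  obtain ⟨θ, θ_pos, θ_lt, gap⟩ := exists_spectral_gap hS hδ hℤ hμ hμS hμ_sum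
  have normSq_le (n : ℕ) : normSq (averagingIterate μ S n) ≤ θ ^ n := by
    induction n with
    | zero =>
      rw [normSq, tsum_eq_single 1 fun b hb => by simp [averagingIterate, hb]]
      simp [averagingIterate]
    | succ n ih =>
      rw [averagingIterate_succ, pow_succ']
      exact (normSq_averaging_le hμ hμ_symm hS_inv θ_lt gap
        (hasFiniteSupport_averagingIterate μ S n)).trans (by gcongr)
  refine ⟨√θ, Real.sqrt_pos.2 θ_pos, by rw [Real.sqrt_lt' one_pos]; simpa using θ_lt,
    fun n g => ?_⟩
  refine le_of_sq_le_sq ?_ (by positivity)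
  calc averagingIterate μ S n g ^ 2 ≤ normSq (averagingIterate μ S n) :=
        (summable_sq (hasFiniteSupport_averagingIterate μ S n)).le_tsum g fun _ _ => sq_nonneg _
    _ ≤ θ ^ n := normSq_le n
    _ = (√θ ^ n) ^ 2 := by rw [← pow_mul, mul_comm n 2, pow_mul, Real.sq_sqrt θ_pos.le]

end SpectralGap

section RestrictedGreen

open Finset.HasAntidiagonal (antidiagonal)

variable {X : Type*} {p : X → X → ℝ≥0∞} {A C : Set X} {x y : X}

/-- The Kronecker delta, with values in `ℝ≥0∞`. -/
def kronecker (x y : X) : ℝ≥0∞ := ({x} : Set X).indicator 1 y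

/-- The total weight, for the kernel `p`, of the paths with `n` steps from `x` to `y` all of whose
positions before the last one are in `A`. -/
def pathWeight (p : X → X → ℝ≥0∞) (A : Set X) : ℕ → X → X → ℝ≥0∞
  | 0 => kronecker
  | n + 1 => fun x y => A.indicator 1 x * ∑' z, p x z * pathWeight p A n z y

/-- The Green function of the walk with kernel `p` stopped on leaving `A`. The end point `y` need
not belong to `A`: outside `A` it is the probability of exiting `A` at `y`. -/
def restrictedGreen (p : X → X → ℝ≥0∞) (A : Set X) (x y : X) : ℝ≥0∞ := ∑' n, pathWeight p A n x y

@[simp]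
lemma kronecker_self (x : X) : kronecker x x = 1 := by simp [kronecker]

lemma kronecker_of_ne (h : x ≠ y) : kronecker x y = 0 := by simp [kronecker, h.symm]

lemma tsum_kronecker_mul (x : X) (f : X → ℝ≥0∞) : ∑' z, kronecker x z * f z = f x := by
  rw [tsum_eq_single x fun z hz => by rw [kronecker_of_ne hz.symm, zero_mul], kronecker_self,
    one_mul]

lemma tsum_mul_kronecker (y : X) (f : X → ℝ≥0∞) : ∑' z, f z * kronecker z y = f y := by
  rw [tsum_eq_single y fun z hz => by rw [kronecker_of_ne hz, mul_zero], kronecker_self, mul_one]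

lemma pathWeight_zero (p : X → X → ℝ≥0∞) (A : Set X) (x y : X) :
    pathWeight p A 0 x y = kronecker x y := rfl

lemma pathWeight_succ_of_mem (hx : x ∈ A) (n : ℕ) (y : X) :
    pathWeight p A (n + 1) x y = ∑' z, p x z * pathWeight p A n z y := by
  simp [pathWeight, hx]

lemma pathWeight_succ_of_notMem (hx : x ∉ A) (n : ℕ) (y : X) : pathWeight p A (n + 1) x y = 0 := by
  simp [pathWeight, hx]

lemma pathWeight_mono (p : X → X → ℝ≥0∞) (hAC : A ⊆ C) (n : ℕ) (x y : X) :
    pathWeight p A n x y ≤ pathWeight p C n x y := by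
  induction n generalizing x with
  | zero => exact le_rfl
  | succ n ih =>
    by_cases hx : x ∈ A
    · rw [pathWeight_succ_of_mem hx, pathWeight_succ_of_mem (hAC hx)]
      gcongr
      exact ih _
    · exact (pathWeight_succ_of_notMem hx n y).trans_le zero_le

lemma pathWeight_succ' (p : X → X → ℝ≥0∞) (A : Set X) (n : ℕ) (x y : X) :
    pathWeight p A (n + 1) x y = ∑' z, pathWeight p A n x z * (A.indicator 1 z * p z y) := by
  induction n generalizing x with
  | zero => simp only [pathWeight, tsum_kronecker_mul, tsum_mul_kronecker]
  | succ n ih =>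
    rw [pathWeight]
    simp only [ih]
    simp only [pathWeight, ← ENNReal.tsum_mul_left, ← ENNReal.tsum_mul_right]
    rw [ENNReal.tsum_comm]
    simp only [mul_assoc]

lemma pathWeight_comm (hp : ∀ x y, p x y = p y x) (A : Set X) (n : ℕ) (x y : X) :
    pathWeight p A n x y * A.indicator 1 y = pathWeight p A n y x * A.indicator 1 x := by
  induction n generalizing x with
  | zero =>
    rcases eq_or_ne x y with rfl | h
    · rfl
    · simp only [pathWeight, kronecker_of_ne h, kronecker_of_ne h.symm, zero_mul]
  | succ n ih =>
    rw [pathWeight_succ' _ _ _ y x]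
    simp only [pathWeight]
    rw [mul_assoc, ← ENNReal.tsum_mul_right, mul_comm]
    congr 1
    refine tsum_congr fun z => ?_
    rw [mul_assoc, ih, hp x z]
    ring

lemma exists_path_of_pathWeight_ne_zero {n : ℕ} (h : pathWeight p A n x y ≠ 0) :
    ∃ c : ℕ → X, c 0 = x ∧ c n = y ∧ ∀ i < n, c i ∈ A ∧ p (c i) (c (i + 1)) ≠ 0 := by
  induction n generalizing x with
  | zero =>
    refine ⟨fun _ => x, rfl, ?_, by simp⟩
    by_contra hne
    exact h (kronecker_of_ne hne)
  | succ n ih =>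
    have hx : x ∈ A := by
      by_contra hx
      exact h (pathWeight_succ_of_notMem hx n y)
    rw [pathWeight_succ_of_mem hx, Ne, ENNReal.tsum_eq_zero, not_forall] at h
    obtain ⟨z, hz⟩ := h
    obtain ⟨c, hc_zero, hc_n, hc⟩ := ih (right_ne_zero_of_mul hz)
    refine ⟨fun i => Nat.casesOn i x c, rfl, hc_n, ?_⟩
    rintro (_ | i) hi
    · exact ⟨hx, by simpa [hc_zero] using left_ne_zero_of_mul hz⟩
    · exact hc i (by omega)

lemma restrictedGreen_mono (p : X → X → ℝ≥0∞) (hAC : A ⊆ C) (x y : X) :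
    restrictedGreen p A x y ≤ restrictedGreen p C x y :=
  ENNReal.tsum_le_tsum fun n => pathWeight_mono p hAC n x y

lemma restrictedGreen_comm (hp : ∀ x y, p x y = p y x) (hx : x ∈ A) (hy : y ∈ A) :
    restrictedGreen p A x y = restrictedGreen p A y x :=
  tsum_congr fun n => by simpa [hx, hy] using pathWeight_comm hp A n x y

lemma one_le_restrictedGreen_self (p : X → X → ℝ≥0∞) (A : Set X) (x : X) :
    1 ≤ restrictedGreen p A x x :=
  (kronecker_self x).ge.trans (ENNReal.le_tsum 0)

lemma restrictedGreen_mul_le (p : X → X → ℝ≥0∞) (x : X) {z : X} (hz : z ∈ A) (y : X) :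
    restrictedGreen p A x z * p z y ≤ restrictedGreen p A x y := by
  rw [restrictedGreen, ← ENNReal.tsum_mul_right]
  calc ∑' n, pathWeight p A n x z * p z y ≤ ∑' n, pathWeight p A (n + 1) x y := by
        refine ENNReal.tsum_le_tsum fun n => ?_
        rw [pathWeight_succ']
        refine le_trans ?_ (ENNReal.le_tsum z)
        rw [Set.indicator_of_mem hz, Pi.one_apply, one_mul]
    _ ≤ restrictedGreen p A x y :=
        ENNReal.tsum_comp_le_tsum_of_injective (add_left_injective 1) fun n => pathWeight p A n x y

lemma sum_exit_pathWeight_le_one (hp : ∀ x, ∑' z, p x z ≤ 1) (A : Set X) (N : ℕ) (x : X) :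
    ∑ n ∈ Finset.range N, ∑' v, Aᶜ.indicator 1 v * pathWeight p A n x v ≤ 1 := by
  induction N generalizing x with
  | zero => simp
  | succ N ih =>
    have at_zero : ∑' v, Aᶜ.indicator 1 v * pathWeight p A 0 x v = Aᶜ.indicator 1 x := by
      simp only [pathWeight, mul_comm (Aᶜ.indicator 1 _)]
      exact tsum_kronecker_mul x _
    rw [Finset.sum_range_succ', at_zero]
    by_cases hx : x ∈ A
    · have first_step (n : ℕ) : ∑' v, Aᶜ.indicator 1 v * pathWeight p A (n + 1) x v =
          ∑' z, p x z * ∑' v, Aᶜ.indicator 1 v * pathWeight p A n z v := by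
        simp only [pathWeight_succ_of_mem hx, ← ENNReal.tsum_mul_left]
        rw [ENNReal.tsum_comm]
        simp only [mul_left_comm]
      simp only [first_step, Set.indicator_of_notMem (Set.notMem_compl_iff.2 hx), add_zero]
      rw [← Summable.tsum_finsetSum fun _ _ => ENNReal.summable]
      refine (ENNReal.tsum_le_tsum fun z => ?_).trans (hp x)
      rw [← Finset.mul_sum]
      exact mul_le_of_le_one_right' (ih z)
    · simp [pathWeight_succ_of_notMem hx, hx]

lemma tsum_exit_restrictedGreen_le_one (hp : ∀ x, ∑' z, p x z ≤ 1) (A : Set X) (x : X) :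
    ∑' v, Aᶜ.indicator 1 v * restrictedGreen p A x v ≤ 1 := by
  simp only [restrictedGreen, ← ENNReal.tsum_mul_left]
  rw [ENNReal.tsum_comm]
  exact ENNReal.tsum_le_of_sum_range_le fun N => sum_exit_pathWeight_le_one hp A N x

lemma tsum_sum_antidiagonal_mul (f g : ℕ → ℝ≥0∞) :
    ∑' n, ∑ ij ∈ antidiagonal n, f ij.1 * g ij.2 = (∑' i, f i) * ∑' j, g j := by
  rw [← ENNReal.tsum_mul_right]
  simp only [← ENNReal.tsum_mul_left]
  rw [← ENNReal.tsum_prod (f := fun i j => f i * g j),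
    ← (Finset.HasAntidiagonal.sigmaAntidiagonalEquivProd (A := ℕ)).tsum_eq, ENNReal.tsum_sigma']
  refine tsum_congr fun n => ?_
  rw [tsum_fintype, ← Finset.sum_coe_sort]
  rfl

/-- The weight of the `n`-step paths in `C` from `x` to `t` that have left `A ⊆ C` at some time,
decomposed according to the first exit from `A`. -/
def exitingWeight (p : X → X → ℝ≥0∞) (A C : Set X) (n : ℕ) (x t : X) : ℝ≥0∞ :=
  ∑' v, Aᶜ.indicator 1 v *
    ∑ ij ∈ antidiagonal n, pathWeight p A ij.1 x v * pathWeight p C ij.2 v t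

lemma exitingWeight_of_notMem (hx : x ∉ A) (n : ℕ) (t : X) :
    exitingWeight p A C n x t = pathWeight p C n x t := by
  have only_zero (v : X) :
      ∑ ij ∈ antidiagonal n, pathWeight p A ij.1 x v * pathWeight p C ij.2 v t =
        kronecker x v * pathWeight p C n v t := by
    cases n with
    | zero => simp [pathWeight]
    | succ n =>
      simp [Finset.Nat.sum_antidiagonal_succ, pathWeight_succ_of_notMem hx, pathWeight_zero]
  simp only [exitingWeight, only_zero, mul_left_comm (Aᶜ.indicator 1 _), tsum_kronecker_mul]
  simp [hx]

lemma exitingWeight_succ_of_mem (hx : x ∈ A) (n : ℕ) (t : X) :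
    exitingWeight p A C (n + 1) x t = ∑' z, p x z * exitingWeight p A C n z t := by
  have no_exit_at_zero (v : X) :
      Aᶜ.indicator 1 v * (pathWeight p A 0 x v * pathWeight p C (n + 1) v t) = 0 := by
    rcases eq_or_ne x v with rfl | hv
    · simp [hx]
    · simp [pathWeight, kronecker_of_ne hv]
  have first_step (v : X) :
      ∑ ij ∈ antidiagonal n, pathWeight p A (ij.1 + 1) x v * pathWeight p C ij.2 v t =
        ∑' z, p x z *
          ∑ ij ∈ antidiagonal n, pathWeight p A ij.1 z v * pathWeight p C ij.2 v t := by
    simp only [pathWeight_succ_of_mem hx, ← ENNReal.tsum_mul_right, Finset.mul_sum, mul_assoc]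
    rw [Summable.tsum_finsetSum fun _ _ => ENNReal.summable]
  simp only [exitingWeight, Finset.Nat.sum_antidiagonal_succ, mul_add, no_exit_at_zero, zero_add,
    first_step, ← ENNReal.tsum_mul_left]
  rw [ENNReal.tsum_comm]
  simp only [mul_left_comm]

lemma pathWeight_eq_exitingWeight_add (p : X → X → ℝ≥0∞) (hAC : A ⊆ C) (n : ℕ) (x t : X) :
    pathWeight p C n x t = exitingWeight p A C n x t + pathWeight p A n x t * A.indicator 1 t := by
  induction n generalizing x with
  | zero =>
    have starting_outside : exitingWeight p A C 0 x t = Aᶜ.indicator 1 x * kronecker x t := by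
      simp only [exitingWeight, Finset.Nat.antidiagonal_zero, Finset.sum_singleton, pathWeight,
        mul_left_comm (Aᶜ.indicator 1 _), tsum_kronecker_mul]
    rw [starting_outside, pathWeight, pathWeight]
    rcases eq_or_ne x t with rfl | h
    · by_cases hx : x ∈ A <;> simp [hx]
    · simp [kronecker_of_ne h]
  | succ n ih =>
    by_cases hx : x ∈ A
    · rw [pathWeight_succ_of_mem (hAC hx), exitingWeight_succ_of_mem hx, pathWeight_succ_of_mem hx,
        ← ENNReal.tsum_mul_right, ← ENNReal.tsum_add]
      simp only [ih, mul_add, mul_assoc]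
    · rw [exitingWeight_of_notMem hx, pathWeight_succ_of_notMem hx, zero_mul, add_zero]

lemma restrictedGreen_eq_tsum_exit_add (p : X → X → ℝ≥0∞) (hAC : A ⊆ C) (x t : X) :
    restrictedGreen p C x t =
      ∑' v, Aᶜ.indicator 1 v * (restrictedGreen p A x v * restrictedGreen p C v t) +
        restrictedGreen p A x t * A.indicator 1 t := by
  rw [restrictedGreen, tsum_congr fun n => pathWeight_eq_exitingWeight_add p hAC n x t,
    ENNReal.tsum_add, ENNReal.tsum_mul_right]
  congr 1
  simp only [exitingWeight]
  rw [ENNReal.tsum_comm]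
  refine tsum_congr fun v => ?_
  rw [ENNReal.tsum_mul_left, restrictedGreen, restrictedGreen, ← tsum_sum_antidiagonal_mul]

lemma restrictedGreen_univ_eq_mul (p : X → X → ℝ≥0∞) (x y : X) :
    restrictedGreen p univ x y = restrictedGreen p {y}ᶜ x y * restrictedGreen p univ y y := by
  rw [restrictedGreen_eq_tsum_exit_add p (subset_univ {y}ᶜ) x y,
    tsum_eq_single y fun v hv => by simp [hv]]
  simp

end RestrictedGreen

section IncrementPaths

lemma tsum_list_eq_add_tsum_cons {α : Type*} (f : List α → ℝ≥0∞) :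
    ∑' l, f l = f [] + ∑' a, ∑' l, f (a :: l) := by
  classical
  rw [ENNReal.tsum_eq_add_tsum_ite [], ← ENNReal.tsum_prod (f := fun a l => f (a :: l))]
  have cons_injective : Function.Injective fun al : α × List α => al.1 :: al.2 :=
    fun _ _ h => by simpa [Prod.ext_iff] using h
  congr 1
  rw [← cons_injective.tsum_eq]
  · simp
  · rintro (_ | ⟨a, l⟩) hl
    · simp at hl
    · exact ⟨(a, l), rfl⟩

/-- The transition probabilities of the right random walk with step law `μ`. -/
def stepKernel (μ : G → ℝ) (x y : G) : ℝ≥0∞ := ENNReal.ofReal (μ (x⁻¹ * y))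

/-- The increments `l` lead from `x` to `y`, and all positions before the last one are in `A`. -/
def IsPathIn (A : Set G) : G → G → List G → Prop
  | x, y, [] => x = y
  | x, y, a :: l => x ∈ A ∧ IsPathIn A (x * a) y l

/-- The probability that the first increments of the walk are those of `l`. -/
def incrementsProb {α : Type*} (μ : α → ℝ) (l : List α) : ℝ≥0∞ :=
  (l.map fun s => ENNReal.ofReal (μ s)).prod

variable {μ : G → ℝ}

lemma tsum_stepKernel_mul (μ : G → ℝ) (x : G) (f : G → ℝ≥0∞) :
    ∑' z, stepKernel μ x z * f z = ∑' s, ENNReal.ofReal (μ s) * f (x * s) := by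
  rw [← (Equiv.mulLeft x).tsum_eq]
  simp [stepKernel]

lemma pathWeight_stepKernel (μ : G → ℝ) (A : Set G) (n : ℕ) (x y : G) :
    pathWeight (stepKernel μ) A n x y =
      ∑' l, {l | l.length = n ∧ IsPathIn A x y l}.indicator (incrementsProb μ) l := by
  classical
  simp only [Set.indicator_apply, mem_ofPred_eq]
  induction n generalizing x with
  | zero =>
    rw [tsum_list_eq_add_tsum_cons]
    simp [pathWeight_zero, kronecker, Set.indicator_apply, IsPathIn, incrementsProb, eq_comm]
  | succ n ih =>
    rw [tsum_list_eq_add_tsum_cons]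
    simp only [pathWeight, tsum_stepKernel_mul, ih]
    by_cases hx : x ∈ A
    · simp [IsPathIn, incrementsProb, hx, ← ENNReal.tsum_mul_left, mul_ite]
    · simp [IsPathIn, hx]

lemma restrictedGreen_stepKernel (μ : G → ℝ) (A : Set G) (x y : G) :
    restrictedGreen (stepKernel μ) A x y =
      ∑' l : {l : List G // IsPathIn A x y l}, incrementsProb μ l := by
  classical
  simp only [restrictedGreen, pathWeight_stepKernel]
  rw [ENNReal.tsum_comm]
  refine Eq.trans (tsum_congr fun l => ?_) (tsum_subtype {l | IsPathIn A x y l} _).symm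
  rw [tsum_eq_single l.length fun n hn => by simp [hn.symm]]
  simp [Set.indicator_apply]

lemma isFirstHitPath_iff (x y : G) (l : List G) : IsFirstHitPath x y l ↔ IsPathIn {y}ᶜ x y l := by
  induction l generalizing x with
  | nil => simp [IsFirstHitPath, walkPositions, IsPathIn]
  | cons a l ih =>
    have positions_cons : walkPositions x (a :: l) = x :: walkPositions (x * a) l := by
      simp [walkPositions]
    have positions_ne_nil : walkPositions (x * a) l ≠ [] := by
      cases l <;> simp [walkPositions]
    rw [IsPathIn, ← ih, IsFirstHitPath, IsFirstHitPath, positions_cons,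
      List.dropLast_cons_of_ne_nil positions_ne_nil, List.mem_cons, not_or,
      Set.mem_compl_singleton_iff, ne_comm, and_left_comm]
    obtain ⟨b, L, hL⟩ := List.exists_cons_of_ne_nil positions_ne_nil
    rw [hL, List.getLast?_cons_cons]

lemma incrementsProb_eq_ofReal {α : Type*} {μ : α → ℝ} (hμ : ∀ g, 0 ≤ μ g) (l : List α) :
    incrementsProb μ l = ENNReal.ofReal (l.map μ).prod := by
  induction l with
  | nil => simp [incrementsProb]
  | cons a l ih =>
    rw [List.map_cons, List.prod_cons, ENNReal.ofReal_mul (hμ a), ← ih]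
    rfl

lemma hitProb_eq_restrictedGreen (hμ : ∀ g, 0 ≤ μ g) (x y : G) :
    hitProb μ x y = (restrictedGreen (stepKernel μ) {y}ᶜ x y).toReal := by
  rw [restrictedGreen_stepKernel, ENNReal.tsum_toReal_eq fun l => by
    simp [incrementsProb_eq_ofReal hμ], hitProb,
    ← (Equiv.subtypeEquivRight (isFirstHitPath_iff x y)).tsum_eq]
  refine tsum_congr fun l => ?_
  rw [incrementsProb_eq_ofReal hμ, ENNReal.toReal_ofReal]
  · rfl
  · exact List.prod_nonneg (by simpa using fun a _ => hμ a)

lemma isPathIn_iff (A : Set G) (x y : G) (l : List G) :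
    IsPathIn A x y l ↔ (∀ k < l.length, x * (l.take k).prod ∈ A) ∧ x * l.prod = y := by
  induction l generalizing x with
  | nil => simp [IsPathIn]
  | cons a l ih =>
    simp [IsPathIn, ih, Nat.forall_lt_succ_left, mul_assoc, and_assoc, -Order.lt_add_one_iff]

lemma isPathIn_one_map_range (A : Set G) (y : G) (n : ℕ) (ω : ℕ → G) :
    IsPathIn A 1 y ((List.range n).map ω) ↔ (∀ k < n, walkPos k ω ∈ A) ∧ walkPos n ω = y := by
  simp only [isPathIn_iff, one_mul, List.length_map, List.length_range, walkPos]
  refine and_congr_left fun _ => forall₂_congr fun k hk => ?_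
  rw [← List.map_take, List.take_range, min_eq_left hk.le]

/-- The event that the first increments of the walk are those of `l`. -/
def incrementsCylinder {α : Type*} (l : List α) : Set (ℕ → α) :=
  {ω | ∀ i : Fin l.length, ω i = l.get i}

lemma mem_incrementsCylinder_iff {α : Type*} (l : List α) (ω : ℕ → α) :
    ω ∈ incrementsCylinder l ↔ (List.range l.length).map ω = l := by
  simp [incrementsCylinder, List.ext_get_iff, Fin.forall_iff]

lemma measurableSet_incrementsCylinder {α : Type*} [MeasurableSpace α] [MeasurableSingletonClass α]
    (l : List α) : MeasurableSet (incrementsCylinder l) := by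
  simp only [incrementsCylinder, ofPred_forall]
  exact MeasurableSet.iInter fun i => measurable_pi_apply _ (measurableSet_singleton _)

lemma IsWalkMeasure.measure_incrementsCylinder {α : Type*} [MeasurableSpace α] {μ : α → ℝ}
    {P : Measure (ℕ → α)} (hP : IsWalkMeasure μ P) (l : List α) :
    P (incrementsCylinder l) = incrementsProb μ l := by
  rw [incrementsCylinder, hP.2, incrementsProb, ← List.prod_ofFn]
  congr 1
  exact List.ext_get (by simp) fun n _ _ => by simp

lemma disjoint_incrementsCylinder {A : Set G} {y : G} {l l' : List G} (hy : y ∉ A)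
    (hl : IsPathIn A 1 y l) (hl' : IsPathIn A 1 y l') (hne : l ≠ l') :
    Disjoint (incrementsCylinder l) (incrementsCylinder l') := by
  refine Set.disjoint_left.2 fun ω hω hω' => hne ?_
  rw [mem_incrementsCylinder_iff] at hω hω'
  rw [← hω, isPathIn_one_map_range] at hl
  rw [← hω', isPathIn_one_map_range] at hl'
  have length_eq : l.length = l'.length :=
    le_antisymm (not_lt.1 fun h => hy (hl'.2 ▸ hl.1 _ h)) (not_lt.1 fun h => hy (hl.2 ▸ hl'.1 _ h))
  rw [← hω, length_eq, hω']

lemma exitLaw_eq_restrictedGreen [Countable G] [MeasurableSpace G] [MeasurableSingletonClass G]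
    {P : Measure (ℕ → G)} (hP : IsWalkMeasure μ P) {R : ℝ} {y : G} (hy : ¬ greenDist μ 1 y ≤ R) :
    exitLaw μ P R y = restrictedGreen (stepKernel μ) {z | greenDist μ 1 z ≤ R} 1 y := by
  have exit_event : {ω : ℕ → G | ∃ n : ℕ, (∀ k < n, greenDist μ 1 (walkPos k ω) ≤ R) ∧
      ¬ greenDist μ 1 (walkPos n ω) ≤ R ∧ walkPos n ω = y} =
      ⋃ l : {l : List G // IsPathIn {z | greenDist μ 1 z ≤ R} 1 y l}, incrementsCylinder l := by
    ext ω
    simp only [mem_ofPred_eq, Set.mem_iUnion, Subtype.exists, exists_prop]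
    constructor
    · rintro ⟨n, inside, -, at_y⟩
      exact ⟨(List.range n).map ω, (isPathIn_one_map_range _ y n ω).2 ⟨inside, at_y⟩,
        (mem_incrementsCylinder_iff _ ω).2 (by simp)⟩
    · rintro ⟨l, hl, hω⟩
      rw [← (mem_incrementsCylinder_iff l ω).1 hω, isPathIn_one_map_range] at hl
      exact ⟨l.length, hl.1, hl.2.symm ▸ hy, hl.2⟩
  rw [exitLaw, exit_event, restrictedGreen_stepKernel, measure_iUnion
    (fun l l' hne => disjoint_incrementsCylinder (A := {z | greenDist μ 1 z ≤ R}) hy l.2 l'.2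
      (Subtype.coe_ne_coe.2 hne)) fun l => measurableSet_incrementsCylinder l.1]
  exact tsum_congr fun l => hP.measure_incrementsCylinder l

end IncrementPaths

section Barriers

variable {X : Type*} {p : X → X → ℝ≥0∞} {o x : X} {D D' : Set X} {ε ε' q b : ℝ≥0∞}

lemma restrictedGreen_univ_eq_tsum_hit_add (p : X → X → ℝ≥0∞) (D : Set X) (u t : X) :
    restrictedGreen p univ u t =
      ∑' v, D.indicator 1 v * (restrictedGreen p Dᶜ u v * restrictedGreen p univ v t) +
        restrictedGreen p Dᶜ u t * Dᶜ.indicator 1 t := by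
  simpa only [compl_compl] using restrictedGreen_eq_tsum_exit_add p (subset_univ Dᶜ) u t

/-- `D` is a barrier between `o` and `x`, up to an error `ε`: some measure `m` on `D`, dominated by
`o` in the sense that its Green potential is at most that of `o`, recovers the Green potential of
`o` at `x` up to the fraction `ε`. For `m` the hitting distribution of `D` from `o`, the fraction is
the proportion of `G(o, x)` carried by the paths that avoid `D`. -/
def IsBarrier (p : X → X → ℝ≥0∞) (o x : X) (D : Set X) (ε : ℝ≥0∞) : Prop :=
  ∃ m : X → ℝ≥0∞, (∀ v ∉ D, m v = 0) ∧
    (∀ t, ∑' v, m v * restrictedGreen p univ v t ≤ restrictedGreen p univ o t) ∧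
    restrictedGreen p univ o x ≤
      ∑' v, m v * restrictedGreen p univ v x + ε * restrictedGreen p univ o x

lemma IsBarrier.singleton (p : X → X → ℝ≥0∞) (o x : X) : IsBarrier p o x {o} 0 := by
  refine ⟨kronecker o, fun v hv => kronecker_of_ne (Ne.symm hv), fun t => ?_, ?_⟩
  · exact (tsum_kronecker_mul o _).le
  · exact (tsum_kronecker_mul o _).ge.trans le_self_add

lemma IsBarrier.mono (h : IsBarrier p o x D ε) (hε : ε ≤ ε') : IsBarrier p o x D ε' := by
  obtain ⟨m, hmD, hm_le, hmx⟩ := h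
  exact ⟨m, hmD, hm_le, hmx.trans (by gcongr)⟩

lemma mul_restrictedGreen_le_of_avoid_le {u : X}
    (hu : restrictedGreen p D'ᶜ u x ≤ ε' * restrictedGreen p univ u x) (c : ℝ≥0∞) :
    c * restrictedGreen p univ u x ≤
      c * ∑' v, D'.indicator 1 v * (restrictedGreen p D'ᶜ u v * restrictedGreen p univ v x) +
        ε' * (c * restrictedGreen p univ u x) := by
  have indicator_le_one : D'ᶜ.indicator (1 : X → ℝ≥0∞) x ≤ 1 :=
    Set.indicator_le_self' (fun _ _ => zero_le) x
  conv_lhs => rw [restrictedGreen_univ_eq_tsum_hit_add p D' u x, mul_add]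
  rw [mul_left_comm ε']
  gcongr _ + c * ?_
  exact (mul_le_of_le_one_right' indicator_le_one).trans hu

/-- Sweeping out the measure on `D` onto the next barrier `D'`. -/
lemma IsBarrier.step (h : IsBarrier p o x D ε)
    (hD' : ∀ u ∈ D, restrictedGreen p D'ᶜ u x ≤ ε' * restrictedGreen p univ u x) :
    IsBarrier p o x D' (ε + ε') := by
  obtain ⟨m, hmD, hm_le, hmx⟩ := h
  set swept : X → ℝ≥0∞ := fun v => ∑' u, m u * (D'.indicator 1 v * restrictedGreen p D'ᶜ u v)
  have potential_swept (t : X) : ∑' v, swept v * restrictedGreen p univ v t =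
      ∑' u, m u *
        ∑' v, D'.indicator 1 v * (restrictedGreen p D'ᶜ u v * restrictedGreen p univ v t) := by
    simp only [swept, ← ENNReal.tsum_mul_left, ← ENNReal.tsum_mul_right]
    rw [ENNReal.tsum_comm]
    simp only [mul_assoc]
  refine ⟨swept, fun v hv => by simp [swept, hv], fun t => ?_, hmx.trans ?_⟩
  · rw [potential_swept]
    refine le_trans (ENNReal.tsum_le_tsum fun u => ?_) (hm_le t)
    rw [restrictedGreen_univ_eq_tsum_hit_add p D' u t]
    gcongr
    exact le_self_add
  · rw [potential_swept, add_mul, add_comm (ε * _), ← add_assoc]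
    gcongr
    calc ∑' u, m u * restrictedGreen p univ u x
        ≤ ∑' u, (m u *
            ∑' v, D'.indicator 1 v * (restrictedGreen p D'ᶜ u v * restrictedGreen p univ v x) +
          ε' * (m u * restrictedGreen p univ u x)) := by
          refine ENNReal.tsum_le_tsum fun u => ?_
          by_cases hu : u ∈ D
          · exact mul_restrictedGreen_le_of_avoid_le (hD' u hu) (m u)
          · simp [hmD u hu]
      _ ≤ _ := by
          rw [ENNReal.tsum_add, ENNReal.tsum_mul_left]
          gcongr
          exact hm_le x

lemma IsBarrier.exists_two_mul_le (h : IsBarrier p o x D 2⁻¹) {B : Finset X} (hDB : D ⊆ B)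
    (hb : ∀ v ∈ B, restrictedGreen p univ v x ≤ b) (hBb : B.card * b < 4⁻¹)
    (hx_zero : restrictedGreen p univ o x ≠ 0) (hx_top : restrictedGreen p univ o x ≠ ⊤) :
    ∃ z ∈ B, 2 * restrictedGreen p univ o x ≤ restrictedGreen p univ o z := by
  obtain ⟨m, hmD, hm_le, hmx⟩ := h
  by_contra! hB
  set g := restrictedGreen p univ o x
  have m_le (v : X) (hv : v ∈ B) : m v ≤ 2 * g :=
    calc m v ≤ m v * restrictedGreen p univ v v :=
          le_mul_of_one_le_right' (one_le_restrictedGreen_self p univ v)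
      _ ≤ ∑' u, m u * restrictedGreen p univ u v := ENNReal.le_tsum v
      _ ≤ 2 * g := (hm_le v).trans (hB v hv).le
  have potential_lt : ∑' v, m v * restrictedGreen p univ v x < 2⁻¹ * g :=
    calc ∑' v, m v * restrictedGreen p univ v x
        = ∑ v ∈ B, m v * restrictedGreen p univ v x :=
          tsum_eq_sum fun v hv => by rw [hmD v fun hvD => hv (hDB hvD), zero_mul]
      _ ≤ ∑ _v ∈ B, 2 * g * b := Finset.sum_le_sum fun v hv => mul_le_mul' (m_le v hv) (hb v hv)
      _ = 2 * (B.card * b) * g := by rw [Finset.sum_const, nsmul_eq_mul]; ring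
      _ < 2 * 4⁻¹ * g := by gcongr; exact ENNReal.ofNat_ne_top
      _ = 2⁻¹ * g := by
          congr 1
          rw [← ENNReal.toReal_eq_toReal_iff' (by finiteness) (by finiteness)]
          norm_num
  have half_ne_top : 2⁻¹ * g ≠ ⊤ := by finiteness
  have lt_self : g < g :=
    calc g ≤ ∑' v, m v * restrictedGreen p univ v x + 2⁻¹ * g := hmx
      _ < 2⁻¹ * g + 2⁻¹ * g := ENNReal.add_lt_add_right half_ne_top potential_lt
      _ = g := by rw [← add_mul, ENNReal.inv_two_add_inv_two, one_mul]
  exact lt_self.false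

lemma le_restrictedGreen_of_two_mul_le {B : Set X} {z : X} (hp_comm : ∀ x y, p x y = p y x)
    (hp_le : ∀ x, ∑' z, p x z ≤ 1) (ho : o ∈ B)
    (hB : ∀ v ∉ B, restrictedGreen p univ o v ≤ q) (hq : q ≠ ⊤)
    (hz : 2 * q ≤ restrictedGreen p univ o z) : q ≤ restrictedGreen p B z o := by
  have green_comm (v : X) : restrictedGreen p univ v o = restrictedGreen p univ o v :=
    restrictedGreen_comm hp_comm (mem_univ v) (mem_univ o)
  have through_exit_le :
      ∑' v, Bᶜ.indicator 1 v * (restrictedGreen p B z v * restrictedGreen p univ v o) ≤ q :=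
    calc _ ≤ ∑' v, Bᶜ.indicator 1 v * restrictedGreen p B z v * q := by
          refine ENNReal.tsum_le_tsum fun v => ?_
          by_cases hv : v ∈ B
          · simp [hv]
          · rw [mul_assoc, green_comm]
            gcongr
            exact hB v hv
      _ ≤ q := by
          rw [ENNReal.tsum_mul_right]
          exact mul_le_of_le_one_left' (tsum_exit_restrictedGreen_le_one hp_le B z)
  refine (ENNReal.add_le_add_iff_left hq).1 ?_
  calc q + q = 2 * q := (two_mul q).symm
    _ ≤ restrictedGreen p univ z o := hz.trans_eq (green_comm z).symm
    _ ≤ q + restrictedGreen p B z o := by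
        rw [restrictedGreen_eq_tsum_exit_add p (subset_univ B) z o]
        gcongr
        simp [ho]

end Barriers

section Divergence

lemma IsHyperbolicWith.le_gromov_of_path {X : Type*} {d : X → X → ℝ} {δ r : ℝ} {w : X}
    (hδ : IsHyperbolicWith d δ) (hd_self : ∀ x, d x x = 0) (hd_comm : ∀ x y, d x y = d y x)
    {k n : ℕ} {c : ℕ → X} (hn : n ≤ 2 ^ k) (hr : ∀ i ≤ n, r ≤ d (c i) w)
    (hc : ∀ i < n, d (c i) (c (i + 1)) ≤ 1) : r - 1 / 2 - δ * k ≤ gromov d w (c 0) (c n) := by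
  induction k generalizing n c with
  | zero =>
    have near : d (c 0) (c n) ≤ 1 := by
      obtain rfl | rfl : n = 0 ∨ n = 1 := by omega
      · exact (hd_self _).trans_le zero_le_one
      · exact hc 0 one_pos
    have h₀ := hr 0 n.zero_le
    have hₙ := hr n le_rfl
    rw [gromov]
    push_cast
    linarith
  | succ k ih =>
    rw [pow_succ] at hn
    set m := n / 2
    have first_half := ih (n := m) (c := c) (by omega) (fun i hi => hr i (by omega))
      fun i hi => hc i (by omega)
    have second_half := ih (n := n - m) (c := fun i => c (m + i)) (by omega)
      (fun i hi => hr (m + i) (by omega)) fun i hi => hc (m + i) (by omega)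
    simp only [add_zero, show m + (n - m) = n by omega] at second_half
    rw [gromov, hd_comm (c 0) (c m), add_comm (d (c 0) w), ← gromov] at first_half
    have := hδ.le_gromov first_half second_half
    push_cast
    linarith

variable {S : Finset G}

lemma gromov_le_of_wordDist_add_lt {δ : ℝ} {u v w x : G} (hS : Generates S)
    (hδ : IsHyperbolicWith (wordDist S) δ) (hvx : gromov (wordDist S) w v x = 0)
    (huv : wordDist S u v + δ < wordDist S v w) : gromov (wordDist S) w u x ≤ δ := by
  have near : δ < gromov (wordDist S) w u v := by
    have := wordDist_triangle hS v u w
    rw [wordDist_comm hS v u] at this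
    rw [gromov]
    linarith
  simpa [near.not_ge] using hδ.gromov_le_or hvx.le u

lemma wordLength_inv_mul_le_of_path (hS : Generates S) {c : ℕ → G} {n : ℕ}
    (hc : ∀ i < n, wordLength S ((c i)⁻¹ * c (i + 1)) ≤ 1) :
    wordLength S ((c 0)⁻¹ * c n) ≤ n := by
  induction n with
  | zero => simp
  | succ n ih =>
    have := ih fun i hi => hc i (by omega)
    have := hc n n.lt_succ_self
    have := wordLength_inv_mul_triangle hS (c 0) (c n) (c (n + 1))
    omega

lemma mem_of_wordLength_eq_one {s : G} (hS : Generates S) (hS_inv : ∀ s, s ∈ S ↔ s⁻¹ ∈ S)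
    (hs : wordLength S s = 1) : s ∈ S := by
  obtain ⟨l, hl, hlS, rfl⟩ := hS.exists_list s
  obtain ⟨a, rfl⟩ := List.length_eq_one_iff.1 (hl.trans hs)
  simpa [← hS_inv] using hlS

end Divergence

section SymmetricSteps

local notation "𝒢[" μ "]" => restrictedGreen (stepKernel μ)

/-- `μ` is a symmetric step law whose support is the finite generating set `S`, and `η > 0` bounds
its nonzero values from below. -/
structure IsSymmetricStep (μ : G → ℝ) (S : Finset G) (η : ℝ) : Prop where
  prob : IsProbDensity μ
  symm : IsSymmetric μ
  generates : Generates S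
  mem_iff : ∀ s, s ∈ S ↔ μ s ≠ 0
  pos : 0 < η
  le : ∀ s ∈ S, η ≤ μ s

namespace IsSymmetricStep

variable {μ : G → ℝ} {S : Finset G} {η : ℝ}

lemma inv_mem_iff (h : IsSymmetricStep μ S η) (s : G) : s ∈ S ↔ s⁻¹ ∈ S := by
  rw [h.mem_iff, h.mem_iff, h.symm]

lemma sum_eq_one (h : IsSymmetricStep μ S η) : ∑ s ∈ S, μ s = 1 :=
  (hasSum_sum_of_ne_finset_zero fun s hs => by simpa [h.mem_iff] using hs).unique h.prob.2

lemma le_one (h : IsSymmetricStep μ S η) : η ≤ 1 := by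
  obtain ⟨s, hs⟩ : S.Nonempty := by
    by_contra hS
    simpa [Finset.not_nonempty_iff_eq_empty.1 hS] using h.sum_eq_one
  exact (h.le s hs).trans (h.sum_eq_one ▸ Finset.single_le_sum (fun t _ => h.prob.1 t) hs)

lemma stepKernel_comm (h : IsSymmetricStep μ S η) (x y : G) :
    stepKernel μ x y = stepKernel μ y x := by
  rw [stepKernel, stepKernel, ← h.symm, mul_inv_rev, inv_inv]

lemma tsum_ofReal_mul (h : IsSymmetricStep μ S η) (f : G → ℝ≥0∞) :
    ∑' s, ENNReal.ofReal (μ s) * f s = ∑ s ∈ S, ENNReal.ofReal (μ s) * f s := by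
  refine tsum_eq_sum fun s hs => ?_
  rw [h.mem_iff, not_not] at hs
  rw [hs, ENNReal.ofReal_zero, zero_mul]

lemma tsum_stepKernel (h : IsSymmetricStep μ S η) (x : G) : ∑' z, stepKernel μ x z = 1 := by
  have := (tsum_stepKernel_mul μ x 1).trans (h.tsum_ofReal_mul 1)
  simp only [Pi.one_apply, mul_one] at this
  rw [this, ← ENNReal.ofReal_sum_of_nonneg fun s _ => h.prob.1 s, h.sum_eq_one, ENNReal.ofReal_one]

lemma wordLength_le_one (h : IsSymmetricStep μ S η) {x y : G} (hxy : stepKernel μ x y ≠ 0) :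
    wordLength S (x⁻¹ * y) ≤ 1 := by
  refine wordLength_le_one_of_mem ((h.mem_iff _).2 fun h0 => hxy ?_)
  rw [stepKernel, h0, ENNReal.ofReal_zero]

lemma averagingIterate_nonneg (h : IsSymmetricStep μ S η) (n : ℕ) (g : G) :
    0 ≤ averagingIterate μ S n g := by
  induction n generalizing g with
  | zero => exact Set.indicator_nonneg (fun _ _ => zero_le_one) g
  | succ n ih =>
    rw [averagingIterate_succ]
    exact Finset.sum_nonneg fun s _ => mul_nonneg (h.prob.1 s) (ih _)

lemma pathWeight_univ (h : IsSymmetricStep μ S η) (n : ℕ) (x y : G) :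
    pathWeight (stepKernel μ) univ n x y =
      ENNReal.ofReal (averagingIterate μ S n (y⁻¹ * x)) := by
  induction n generalizing x with
  | zero =>
    rw [pathWeight_zero]
    rcases eq_or_ne x y with rfl | hxy
    · simp [averagingIterate]
    · have : y⁻¹ * x ≠ 1 := fun h1 => hxy (inv_mul_eq_one.1 h1).symm
      simp [averagingIterate, kronecker_of_ne hxy, this]
  | succ n ih =>
    rw [pathWeight_succ_of_mem (mem_univ x), tsum_stepKernel_mul, h.tsum_ofReal_mul,
      averagingIterate_succ, averaging, ENNReal.ofReal_sum_of_nonneg fun s _ =>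
        mul_nonneg (h.prob.1 s) (h.averagingIterate_nonneg n _)]
    simp only [ih, ENNReal.ofReal_mul (h.prob.1 _), mul_assoc]

lemma green_self (h : IsSymmetricStep μ S η) (x : G) : 𝒢[μ] univ x x = 𝒢[μ] univ 1 1 := by
  simp only [restrictedGreen, h.pathWeight_univ, inv_mul_cancel]

lemma pathWeight_eq_zero_of_lt (h : IsSymmetricStep μ S η) (A : Set G) {n : ℕ} {x y : G}
    (hn : n < wordLength S (x⁻¹ * y)) : pathWeight (stepKernel μ) A n x y = 0 := by
  by_contra hne
  obtain ⟨c, rfl, rfl, hc⟩ := exists_path_of_pathWeight_ne_zero hne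
  exact hn.not_ge (wordLength_inv_mul_le_of_path h.generates fun i hi =>
    h.wordLength_le_one (hc i hi).2)

lemma green_mul_pow_le (h : IsSymmetricStep μ S η) {A : Set G} {c : ℕ → G} {n : ℕ}
    (hA : ∀ i < n, c i ∈ A) (hc : ∀ i < n, (c i)⁻¹ * c (i + 1) ∈ S) (x : G) :
    𝒢[μ] A x (c 0) * ENNReal.ofReal η ^ n ≤ 𝒢[μ] A x (c n) := by
  induction n with
  | zero => simp
  | succ n ih =>
    calc 𝒢[μ] A x (c 0) * ENNReal.ofReal η ^ (n + 1)
        = 𝒢[μ] A x (c 0) * ENNReal.ofReal η ^ n * ENNReal.ofReal η := by ring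
      _ ≤ 𝒢[μ] A x (c n) * stepKernel μ (c n) (c (n + 1)) := by
          gcongr
          · exact ih (fun i hi => hA i (by omega)) fun i hi => hc i (by omega)
          · exact ENNReal.ofReal_le_ofReal (h.le _ (hc n n.lt_succ_self))
      _ ≤ 𝒢[μ] A x (c (n + 1)) := restrictedGreen_mul_le _ x (hA n n.lt_succ_self) _

lemma exists_geodesic (h : IsSymmetricStep μ S η) (x y : G) :
    ∃ c : ℕ → G, c 0 = x ∧ c (wordLength S (x⁻¹ * y)) = y ∧
      IsNatGeodesic S (wordLength S (x⁻¹ * y)) c ∧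
      ∀ i < wordLength S (x⁻¹ * y), (c i)⁻¹ * c (i + 1) ∈ S := by
  obtain ⟨p, p_zero, p_last, hp⟩ := exists_isNatGeodesic h.generates (x⁻¹ * y)
  have increment (i j : ℕ) : (x * p i)⁻¹ * (x * p j) = (p i)⁻¹ * p j := by group
  refine ⟨fun i => x * p i, by simp [p_zero], by simp [p_last], fun i j hij hj => ?_,
    fun i hi => ?_⟩
  · rw [increment, hp hij hj]
  · rw [increment]
    refine mem_of_wordLength_eq_one h.generates h.inv_mem_iff ?_
    rw [hp i.le_succ hi, i.succ_eq_add_one, Nat.add_sub_cancel_left]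

lemma pow_wordLength_le_green (h : IsSymmetricStep μ S η) (x y : G) :
    ENNReal.ofReal η ^ wordLength S (x⁻¹ * y) ≤ 𝒢[μ] univ x y := by
  obtain ⟨c, c_zero, c_last, -, hc⟩ := h.exists_geodesic x y
  calc ENNReal.ofReal η ^ wordLength S (x⁻¹ * y)
      ≤ 𝒢[μ] univ x x * ENNReal.ofReal η ^ wordLength S (x⁻¹ * y) :=
        le_mul_of_one_le_left' (one_le_restrictedGreen_self _ _ x)
    _ ≤ 𝒢[μ] univ x y := by
        simpa only [c_zero, c_last] using h.green_mul_pow_le (fun i _ => mem_univ (c i)) hc x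

lemma ofReal_pow_le_green (h : IsSymmetricStep μ S η) {x y : G} {n : ℕ}
    (hn : wordLength S (x⁻¹ * y) ≤ n) : ENNReal.ofReal (η ^ n) ≤ 𝒢[μ] univ x y := by
  refine le_trans ?_ (h.pow_wordLength_le_green x y)
  rw [← ENNReal.ofReal_pow h.pos.le]
  exact ENNReal.ofReal_le_ofReal (pow_le_pow_of_le_one h.pos.le h.le_one hn)

lemma green_ne_zero (h : IsSymmetricStep μ S η) (x y : G) : 𝒢[μ] univ x y ≠ 0 :=
  ((ENNReal.ofReal_pos.2 (pow_pos h.pos _)).trans_le (h.ofReal_pow_le_green le_rfl)).ne'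

end IsSymmetricStep

/-- A symmetric step law whose return probabilities decay exponentially, at rate `ρ`. -/
structure IsDecayingStep (μ : G → ℝ) (S : Finset G) (η ρ : ℝ) : Prop
    extends IsSymmetricStep μ S η where
  rate_pos : 0 < ρ
  rate_lt_one : ρ < 1
  decay : ∀ n x y, pathWeight (stepKernel μ) univ n x y ≤ ENNReal.ofReal ρ ^ n

namespace IsDecayingStep

variable {μ : G → ℝ} {S : Finset G} {η ρ : ℝ}

lemma green_le (h : IsDecayingStep μ S η ρ) {A : Set G} {x y : G} {T : ℕ}
    (hT : ∀ n < T, pathWeight (stepKernel μ) A n x y = 0) :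
    𝒢[μ] A x y ≤ ENNReal.ofReal (ρ ^ T / (1 - ρ)) := by
  have from_T : 𝒢[μ] A x y = ∑' n, pathWeight (stepKernel μ) A (n + T) x y := by
    rw [restrictedGreen, ← ENNReal.summable.sum_add_tsum_nat_add' (k := T),
      Finset.sum_eq_zero fun n hn => hT n (Finset.mem_range.1 hn), zero_add]
  calc 𝒢[μ] A x y ≤ ∑' n, ENNReal.ofReal ρ ^ (n + T) := by
        rw [from_T]
        exact ENNReal.tsum_le_tsum fun n =>
          (pathWeight_mono _ (subset_univ A) _ x y).trans (h.decay _ x y)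
    _ = ENNReal.ofReal (ρ ^ T / (1 - ρ)) := by
        simp only [pow_add]
        rw [ENNReal.tsum_mul_right, ENNReal.tsum_geometric, mul_comm, div_eq_mul_inv,
          ENNReal.ofReal_mul (pow_nonneg h.rate_pos.le _), ENNReal.ofReal_pow h.rate_pos.le,
          ENNReal.ofReal_inv_of_pos (sub_pos.2 h.rate_lt_one), ENNReal.ofReal_sub _ h.rate_pos.le,
          ENNReal.ofReal_one]

lemma green_ne_top (h : IsDecayingStep μ S η ρ) (A : Set G) (x y : G) : 𝒢[μ] A x y ≠ ⊤ :=
  ne_top_of_le_ne_top ENNReal.ofReal_ne_top (h.green_le (T := 0) (by simp))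

end IsDecayingStep

end SymmetricSteps

section DyadicScales

/-- The radius of the barrier placed at distance `2 ^ j` from the target. A path with fewer than
`4 ^ j = 2 ^ (2 * j)` steps that stays farther than this from `w` joins two points whose Gromov
product seen from `w` exceeds `δ`. -/
def shadowRadius (δ j : ℕ) : ℕ := δ * (2 * j + 1) + 1

/-- The scale `j` is large enough for the barrier of radius `shadowRadius δ j` to catch all but a
fraction `(1 / 2) ^ (j + 2)` of the Green function. -/
structure IsGoodScale (δ : ℕ) (η ρ : ℝ) (j : ℕ) : Prop where
  radius_lt : shadowRadius δ (j + 1) + δ < 2 ^ j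
  tail_le : ρ ^ (4 ^ j) / (1 - ρ) ≤ (1 / 2) ^ (j + 2) * η ^ (2 ^ (j + 1) + shadowRadius δ (j + 1))

variable {η ρ : ℝ}

lemma eventually_linear_le_two_pow (a b : ℕ) : ∀ᶠ j : ℕ in atTop, a * j + b ≤ 2 ^ j := by
  have linear : (fun j : ℕ => (a * j + b : ℝ)) =o[atTop] fun j => (2 : ℝ) ^ j :=
    ((isLittleO_coe_const_pow_of_one_lt one_lt_two).const_mul_left _).add
      ((Asymptotics.isLittleO_const_left).2 (Or.inr (by
        simpa [Function.comp_def] using tendsto_pow_atTop_atTop_of_one_lt (one_lt_two (α := ℝ)))))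
  filter_upwards [linear.bound one_pos] with j hj
  rw [one_mul, Real.norm_of_nonneg (by positivity), Real.norm_of_nonneg (by positivity)] at hj
  exact_mod_cast hj

lemma exists_forall_pow_le_pow {κ : ℝ} (hρ : 0 ≤ ρ) (hρ_lt : ρ < 1) (hκ : 0 < κ) :
    ∃ N : ℕ, ∀ a b : ℕ, N * b ≤ a → ρ ^ a ≤ κ ^ b := by
  obtain ⟨N, hN⟩ := exists_pow_lt_of_lt_one hκ hρ_lt
  refine ⟨N, fun a b hab => ?_⟩
  calc ρ ^ a ≤ ρ ^ (N * b) := pow_le_pow_of_le_one hρ hρ_lt.le hab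
    _ = (ρ ^ N) ^ b := pow_mul ρ N b
    _ ≤ κ ^ b := by gcongr

lemma eventually_isGoodScale (δ : ℕ) (hη : 0 < η) (hρ : 0 ≤ ρ) (hρ_lt : ρ < 1) :
    ∀ᶠ j in atTop, IsGoodScale δ η ρ j := by
  have one_sub_pos : 0 < 1 - ρ := sub_pos.2 hρ_lt
  obtain ⟨N, hN⟩ := exists_forall_pow_le_pow hρ hρ_lt
    (lt_min one_sub_pos (half_pos hη) : 0 < min (1 - ρ) (η / 2))
  filter_upwards [eventually_linear_le_two_pow (2 * δ) (4 * δ + 3),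
    eventually_linear_le_two_pow 0 (N * 3)] with j hj_radius hj_N
  have radius_eq : shadowRadius δ (j + 1) + δ + 2 = 2 * δ * j + (4 * δ + 3) := by
    rw [shadowRadius]
    ring
  refine ⟨by omega, ?_⟩
  set A := 2 ^ (j + 1) + shadowRadius δ (j + 1) with hA
  have le_A : j + 2 ≤ A := by
    have : j < 2 ^ j := Nat.lt_two_pow_self
    rw [hA]
    omega
  have succ_A_le : A + 1 ≤ 3 * 2 ^ j := by
    rw [hA]
    omega
  have exponent_le : N * (A + 1) ≤ 4 ^ j :=
    calc N * (A + 1) ≤ N * (3 * 2 ^ j) := Nat.mul_le_mul_left N succ_A_le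
      _ = N * 3 * 2 ^ j := by ring
      _ ≤ 2 ^ j * 2 ^ j := Nat.mul_le_mul_right _ (by omega)
      _ = 4 ^ j := (mul_pow 2 2 j).symm
  rw [div_le_iff₀ one_sub_pos]
  calc ρ ^ 4 ^ j ≤ min (1 - ρ) (η / 2) ^ (A + 1) := hN _ _ exponent_le
    _ = min (1 - ρ) (η / 2) ^ A * min (1 - ρ) (η / 2) := pow_succ _ _
    _ ≤ (η / 2) ^ A * (1 - ρ) := by
        gcongr
        exacts [min_le_right _ _, min_le_left _ _]
    _ = (1 / 2) ^ A * η ^ A * (1 - ρ) := by rw [← mul_pow, one_div_mul_eq_div]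
    _ ≤ (1 / 2) ^ (j + 2) * η ^ A * (1 - ρ) := by
        gcongr ?_ * _ * _
        exact pow_le_pow_of_le_one (by norm_num) (by norm_num) le_A

lemma eventually_pow_shadowRadius_mul_lt (δ : ℕ) {V : ℕ} (hV : 1 ≤ V) (hρ : 0 ≤ ρ)
    (hρ_lt : ρ < 1) :
    ∀ᶠ j in atTop,
      (V : ℝ) ^ shadowRadius δ j * (ρ ^ (2 ^ j - shadowRadius δ j) / (1 - ρ)) < 1 / 4 := by
  have one_sub_pos : 0 < 1 - ρ := sub_pos.2 hρ_lt
  have V_pos : (0 : ℝ) < V := mod_cast hV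
  obtain ⟨M, hM⟩ := exists_forall_pow_le_pow hρ hρ_lt
    (by positivity : 0 < min ((1 - ρ) / 8) (V : ℝ)⁻¹)
  filter_upwards [eventually_linear_le_two_pow ((M + 1) * (2 * δ)) ((M + 1) * (δ + 2))] with j hj
  set r := shadowRadius δ j with hr
  have exponent_le : M * (r + 1) ≤ 2 ^ j - r := by
    have : (M + 1) * (2 * δ) * j + (M + 1) * (δ + 2) = M * (r + 1) + (r + 1) := by
      rw [hr, shadowRadius]
      ring
    omega
  calc (V : ℝ) ^ r * (ρ ^ (2 ^ j - r) / (1 - ρ))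
      ≤ (V : ℝ) ^ r * ((V : ℝ)⁻¹ ^ r * ((1 - ρ) / 8) / (1 - ρ)) := by
        gcongr
        refine (hM _ _ exponent_le).trans ?_
        rw [pow_succ]
        gcongr
        exacts [min_le_right _ _, min_le_left _ _]
    _ = 1 / 8 := by
        rw [mul_div_assoc, ← mul_assoc, ← mul_pow, mul_inv_cancel₀ V_pos.ne', one_pow, one_mul,
          div_right_comm, div_self one_sub_pos.ne']
    _ < 1 / 4 := by norm_num

end DyadicScales

section GreenDoubling

local notation "𝒢[" μ "]" => restrictedGreen (stepKernel μ)

/-- The closed ball of center `w` and radius `r` for the word metric of `S`. -/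
def wordBall (S : Finset G) (w : G) (r : ℕ) : Set G := {g | wordLength S (w⁻¹ * g) ≤ r}

/-- The points `w 0, …, w J` lie on a geodesic from `1` to `x`, the point `w j` at distance `2 ^ j`
from `x`, and `J` is the last scale that fits. -/
structure IsDyadicApproach (S : Finset G) (x : G) (J : ℕ) (w : ℕ → G) : Prop where
  dist_end : ∀ j ≤ J, wordLength S ((w j)⁻¹ * x) = 2 ^ j
  dist_succ : ∀ j < J, wordLength S ((w (j + 1))⁻¹ * w j) = 2 ^ j
  length_add : wordLength S (w J) + 2 ^ J = wordLength S x
  length_lt : wordLength S x < 2 ^ (J + 1)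

variable {μ : G → ℝ} {S : Finset G} {η ρ : ℝ} {δ j J : ℕ} {u x : G} {w : ℕ → G}

lemma exists_finset_eq_wordBall (hS : Generates S) :
    ∃ V : ℕ, 1 ≤ V ∧ ∀ w r, ∃ B : Finset G, B = wordBall S w r ∧ B.card ≤ V ^ r := by
  classical
  obtain ⟨V, hV, hball⟩ := exists_finset_wordBall hS
  refine ⟨V, hV, fun w r => ?_⟩
  obtain ⟨B, hB, hBV⟩ := hball r
  refine ⟨B.image (w * ·), ?_, Finset.card_image_le.trans hBV⟩
  ext g
  simp [wordBall, ← hB]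

lemma exists_isDyadicApproach (hS : Generates S) (hJ : 2 ^ J ≤ wordLength S x)
    (hJ_lt : wordLength S x < 2 ^ (J + 1)) : ∃ w, IsDyadicApproach S x J w := by
  obtain ⟨p, p_zero, p_last, hp⟩ := exists_isNatGeodesic hS x
  set n := wordLength S x
  have pow_le {j : ℕ} (hj : j ≤ J) : 2 ^ j ≤ n := (Nat.pow_le_pow_right two_pos hj).trans hJ
  refine ⟨fun j => p (n - 2 ^ j), fun j hj => ?_, fun j hj => ?_, ?_, hJ_lt⟩
  · have := hp (n.sub_le (2 ^ j)) le_rfl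
    rwa [p_last, Nat.sub_sub_self (pow_le hj)] at this
  · have := pow_le hj
    rw [pow_succ] at this ⊢
    rw [hp (by omega) (by omega)]
    omega
  · have := hp (Nat.zero_le (n - 2 ^ J)) (n.sub_le _)
    rw [p_zero, inv_one, one_mul] at this
    omega

lemma IsGoodScale.shadowRadius_lt (h : IsGoodScale δ η ρ j) : shadowRadius δ j < 2 ^ j := by
  refine lt_of_le_of_lt ?_ h.radius_lt
  rw [shadowRadius, shadowRadius]
  nlinarith

lemma pathWeight_compl_wordBall_eq_zero (hμ : IsSymmetricStep μ S η)
    (hδ : IsHyperbolicWith (wordDist S) δ) {w : G} (hj : shadowRadius δ j < 2 ^ j)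
    (hwx : wordLength S (w⁻¹ * x) = 2 ^ j) (hu : gromov (wordDist S) w u x ≤ δ) {n : ℕ}
    (hn : n < 4 ^ j) : pathWeight (stepKernel μ) (wordBall S w (shadowRadius δ j))ᶜ n u x = 0 := by
  by_contra hne
  obtain ⟨c, rfl, rfl, hc⟩ := exists_path_of_pathWeight_ne_zero hne
  have far (i : ℕ) (hi : i ≤ n) : (shadowRadius δ j + 1 : ℝ) ≤ wordDist S (c i) w := by
    rw [wordDist_comm hμ.generates, wordDist]
    norm_cast
    rcases hi.lt_or_eq with hi | rfl
    · exact Nat.lt_of_not_le (hc i hi).1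
    · rwa [hwx]
  have short_steps (i : ℕ) (hi : i < n) : wordDist S (c i) (c (i + 1)) ≤ 1 := by
    rw [wordDist]
    exact_mod_cast hμ.wordLength_le_one (hc i hi).2
  have few_steps : n ≤ 2 ^ (2 * j) := by
    rw [pow_mul]
    exact hn.le
  have := hδ.le_gromov_of_path (by simp [wordDist]) (wordDist_comm hμ.generates) few_steps far
    short_steps
  rw [shadowRadius] at this
  push_cast at this
  linarith

lemma green_compl_wordBall_le (hμ : IsDecayingStep μ S η ρ)
    (hδ : IsHyperbolicWith (wordDist S) δ) {w : G} (hj : IsGoodScale δ η ρ j)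
    (hwx : wordLength S (w⁻¹ * x) = 2 ^ j) (hu : gromov (wordDist S) w u x ≤ δ)
    (hux : wordLength S (u⁻¹ * x) ≤ 2 ^ (j + 1) + shadowRadius δ (j + 1)) :
    𝒢[μ] (wordBall S w (shadowRadius δ j))ᶜ u x ≤
      ENNReal.ofReal ((1 / 2) ^ (j + 2)) * 𝒢[μ] univ u x :=
  calc 𝒢[μ] (wordBall S w (shadowRadius δ j))ᶜ u x
      ≤ ENNReal.ofReal (ρ ^ (4 ^ j) / (1 - ρ)) := hμ.green_le fun n hn =>
        pathWeight_compl_wordBall_eq_zero hμ.toIsSymmetricStep hδ hj.shadowRadius_lt hwx hu hn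
    _ ≤ ENNReal.ofReal ((1 / 2) ^ (j + 2) * η ^ (2 ^ (j + 1) + shadowRadius δ (j + 1))) :=
        ENNReal.ofReal_le_ofReal hj.tail_le
    _ ≤ ENNReal.ofReal ((1 / 2) ^ (j + 2)) * 𝒢[μ] univ u x := by
        rw [ENNReal.ofReal_mul (by positivity)]
        gcongr
        exact hμ.ofReal_pow_le_green hux

lemma IsDyadicApproach.isBarrier_last (hw : IsDyadicApproach S x J w)
    (hμ : IsDecayingStep μ S η ρ) (hδ : IsHyperbolicWith (wordDist S) δ)
    (hJ : IsGoodScale δ η ρ J) :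
    IsBarrier (stepKernel μ) 1 x (wordBall S (w J) (shadowRadius δ J))
      (ENNReal.ofReal ((1 / 2) ^ (J + 1))) := by
  have on_geodesic : gromov (wordDist S) (w J) 1 x = 0 := by
    rw [gromov, wordDist_comm hμ.generates x]
    simp only [wordDist, inv_one, one_mul, hw.dist_end J le_rfl, ← hw.length_add]
    push_cast
    ring
  refine ((IsBarrier.singleton _ 1 x).step (ε' := ENNReal.ofReal ((1 / 2) ^ (J + 2))) ?_).mono ?_
  · rintro _ rfl
    refine green_compl_wordBall_le hμ hδ hJ (hw.dist_end J le_rfl)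
      (on_geodesic.trans_le δ.cast_nonneg) ?_
    rw [inv_one, one_mul]
    exact hw.length_lt.le.trans le_self_add
  · rw [zero_add]
    exact ENNReal.ofReal_le_ofReal
      (pow_le_pow_of_le_one (by norm_num) (by norm_num) (Nat.le_succ _))

lemma IsDyadicApproach.isBarrier_of_succ (hw : IsDyadicApproach S x J w)
    (hμ : IsDecayingStep μ S η ρ) (hδ : IsHyperbolicWith (wordDist S) δ) (hjJ : j < J)
    (hj : IsGoodScale δ η ρ j)
    (hbarrier : IsBarrier (stepKernel μ) 1 x (wordBall S (w (j + 1)) (shadowRadius δ (j + 1)))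
      (ENNReal.ofReal ((1 / 2) ^ (j + 2)))) :
    IsBarrier (stepKernel μ) 1 x (wordBall S (w j) (shadowRadius δ j))
      (ENNReal.ofReal ((1 / 2) ^ (j + 1))) := by
  have hS := hμ.generates
  have on_geodesic : gromov (wordDist S) (w j) (w (j + 1)) x = 0 := by
    rw [gromov, wordDist_comm hS x, wordDist, wordDist, wordDist, hw.dist_succ j hjJ,
      hw.dist_end j hjJ.le, hw.dist_end (j + 1) hjJ]
    push_cast
    ring
  refine (hbarrier.step (ε' := ENNReal.ofReal ((1 / 2) ^ (j + 2))) fun u hu => ?_).mono ?_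
  · have near : wordLength S (u⁻¹ * w (j + 1)) ≤ shadowRadius δ (j + 1) := by
      rwa [wordLength_inv_mul_comm hS]
    refine green_compl_wordBall_le hμ hδ hj (hw.dist_end j hjJ.le)
      (gromov_le_of_wordDist_add_lt hS hδ on_geodesic ?_) ?_
    · rw [wordDist, wordDist, hw.dist_succ j hjJ]
      exact_mod_cast (Nat.add_le_add_right near δ).trans_lt hj.radius_lt
    · have := wordLength_inv_mul_triangle hS u (w (j + 1)) x
      rw [hw.dist_end (j + 1) hjJ] at this
      omega
  · rw [← ENNReal.ofReal_add (by positivity) (by positivity)]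
    exact ENNReal.ofReal_le_ofReal (by ring_nf; rfl)

lemma IsDyadicApproach.isBarrier (hw : IsDyadicApproach S x J w) (hμ : IsDecayingStep μ S η ρ)
    (hδ : IsHyperbolicWith (wordDist S) δ) (hjJ : j ≤ J)
    (hj : ∀ i, j ≤ i → IsGoodScale δ η ρ i) :
    IsBarrier (stepKernel μ) 1 x (wordBall S (w j) (shadowRadius δ j)) 2⁻¹ := by
  have at_scale : IsBarrier (stepKernel μ) 1 x (wordBall S (w j) (shadowRadius δ j))
      (ENNReal.ofReal ((1 / 2) ^ (j + 1))) :=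
    Nat.decreasingInduction' (fun i hiJ hji => hw.isBarrier_of_succ hμ hδ hiJ (hj i hji)) hjJ
      (hw.isBarrier_last hμ hδ (hj J hjJ))
  refine at_scale.mono ?_
  rw [← ENNReal.ofReal_ofNat, ← ENNReal.ofReal_inv_of_pos two_pos, ← one_div]
  exact ENNReal.ofReal_le_ofReal (pow_le_of_le_one (by norm_num) (by norm_num) j.succ_ne_zero)

lemma IsDyadicApproach.exists_two_mul_green_le (hw : IsDyadicApproach S x J w)
    (hμ : IsDecayingStep μ S η ρ) (hδ : IsHyperbolicWith (wordDist S) δ) (hjJ : j ≤ J)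
    (hj : ∀ i, j ≤ i → IsGoodScale δ η ρ i) {B : Finset G}
    (hB : B = wordBall S (w j) (shadowRadius δ j))
    (hB_card : B.card * ENNReal.ofReal (ρ ^ (2 ^ j - shadowRadius δ j) / (1 - ρ)) < 4⁻¹) :
    ∃ z, wordLength S (z⁻¹ * x) ≤ shadowRadius δ j + 2 ^ j ∧
      2 * 𝒢[μ] univ 1 x ≤ 𝒢[μ] univ 1 z := by
  have hS := hμ.generates
  have near {v : G} (hv : v ∈ B) : wordLength S ((w j)⁻¹ * v) ≤ shadowRadius δ j :=
    hB.subset (Finset.mem_coe.2 hv)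
  have green_le (v : G) (hv : v ∈ B) :
      𝒢[μ] univ v x ≤ ENNReal.ofReal (ρ ^ (2 ^ j - shadowRadius δ j) / (1 - ρ)) := by
    refine hμ.green_le fun n hn => hμ.pathWeight_eq_zero_of_lt _ ?_
    have := wordLength_inv_mul_triangle hS (w j) v x
    have := hw.dist_end j hjJ
    have := near hv
    omega
  obtain ⟨z, hz, hzx⟩ := (hw.isBarrier hμ hδ hjJ hj).exists_two_mul_le hB.ge green_le hB_card
    (hμ.green_ne_zero 1 x) (hμ.green_ne_top univ 1 x)
  refine ⟨z, ?_, hzx⟩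
  have := wordLength_inv_mul_triangle hS z (w j) x
  rw [wordLength_inv_mul_comm hS z (w j), hw.dist_end j hjJ] at this
  exact this.trans (Nat.add_le_add_right (near hz) _)

theorem IsDecayingStep.exists_two_mul_green_le (hμ : IsDecayingStep μ S η ρ)
    (hδ : IsHyperbolicWith (wordDist S) δ) :
    ∃ n K : ℕ, ∀ x, n ≤ wordLength S x →
      ∃ z, wordLength S (z⁻¹ * x) ≤ K ∧ 2 * 𝒢[μ] univ 1 x ≤ 𝒢[μ] univ 1 z := by
  have hS := hμ.generates
  obtain ⟨V, hV, hball⟩ := exists_finset_eq_wordBall hS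
  obtain ⟨j, hj⟩ := ((eventually_isGoodScale δ hμ.pos hμ.rate_pos.le hμ.rate_lt_one).and
    (eventually_pow_shadowRadius_mul_lt δ hV hμ.rate_pos.le hμ.rate_lt_one)).exists_forall_of_atTop
  refine ⟨2 ^ j, shadowRadius δ j + 2 ^ j, fun x hx => ?_⟩
  have hx_ne : wordLength S x ≠ 0 := (Nat.two_pow_pos j |>.trans_le hx).ne'
  obtain ⟨w, hw⟩ := exists_isDyadicApproach hS (Nat.pow_log_le_self 2 hx_ne)
    (Nat.lt_pow_succ_log_self one_lt_two _)
  obtain ⟨B, hB, hBV⟩ := hball (w j) (shadowRadius δ j)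
  refine hw.exists_two_mul_green_le hμ hδ (Nat.le_log_of_pow_le one_lt_two hx)
    (fun i hi => (hj i hi).1) hB ((mul_le_mul_left (Nat.cast_le.2 hBV) _).trans_lt ?_)
  rw [← ENNReal.ofReal_natCast, ← ENNReal.ofReal_mul (by positivity), ← ENNReal.ofReal_ofNat,
    ← ENNReal.ofReal_inv_of_pos four_pos, ENNReal.ofReal_lt_ofReal_iff (by norm_num), ← one_div,
    Nat.cast_pow]
  exact (hj j le_rfl).2

end GreenDoubling

section ExitLaw

local notation "𝒢[" μ "]" => restrictedGreen (stepKernel μ)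

/-- The ball `B_G(1, R)` of the Green metric. -/
def greenBall (μ : G → ℝ) (R : ℝ) : Set G := {z | greenDist μ 1 z ≤ R}

variable {μ : G → ℝ} {S : Finset G} {η ρ R : ℝ} {δ : ℕ}

namespace IsSymmetricStep

lemma mem_greenSphere_iff (h : IsSymmetricStep μ S η) {y : G} :
    y ∈ greenSphere μ R ↔ y ∉ greenBall μ R ∧ ∃ y' ∈ greenBall μ R, y'⁻¹ * y ∈ S := by
  refine and_congr_right fun _ => ⟨?_, ?_⟩
  · rintro ⟨s, hs, hys⟩
    exact ⟨y * s⁻¹, hys, by simpa [h.mem_iff] using hs⟩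
  · rintro ⟨y', hy', hs⟩
    exact ⟨y'⁻¹ * y, (h.mem_iff _).1 hs, by simpa [greenBall] using hy'⟩

lemma exists_exit_near (h : IsSymmetricStep μ S η) {B : Set G} {z x : G} (hz : z ∈ B)
    (hx : x ∉ B) (o : G) :
    ∃ y ∉ B, (∃ y' ∈ B, y'⁻¹ * y ∈ S) ∧ wordLength S (x⁻¹ * y) ≤ wordLength S (z⁻¹ * x) ∧
      𝒢[μ] B o z * ENNReal.ofReal η ^ wordLength S (z⁻¹ * x) ≤ 𝒢[μ] B o y := by
  classical
  obtain ⟨c, c_zero, c_last, hc, hcS⟩ := h.exists_geodesic z x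
  set n := wordLength S (z⁻¹ * x)
  have leaves : ∃ i, c i ∉ B := ⟨n, c_last ▸ hx⟩
  have find_le : Nat.find leaves ≤ n := Nat.find_min' leaves (c_last ▸ hx)
  have inside (i : ℕ) (hi : i < Nat.find leaves) : c i ∈ B := not_not.1 (Nat.find_min leaves hi)
  obtain ⟨k, hk⟩ : ∃ k, Nat.find leaves = k + 1 :=
    Nat.exists_eq_succ_of_ne_zero fun h0 => Nat.find_spec leaves (h0 ▸ c_zero ▸ hz)
  refine ⟨c (Nat.find leaves), Nat.find_spec leaves, ⟨c k, inside k (by omega), ?_⟩, ?_, ?_⟩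
  · rw [hk]
    exact hcS k (by omega)
  · rw [wordLength_inv_mul_comm h.generates]
    have := hc find_le le_rfl
    rw [c_last] at this
    omega
  · calc 𝒢[μ] B o z * ENNReal.ofReal η ^ n
        ≤ 𝒢[μ] B o (c 0) * ENNReal.ofReal η ^ Nat.find leaves := by
          rw [c_zero]
          refine mul_le_mul_right ?_ _
          exact pow_le_pow_right_of_le_one' (ENNReal.ofReal_le_one.2 h.le_one) find_le
      _ ≤ 𝒢[μ] B o (c (Nat.find leaves)) :=
          h.green_mul_pow_le inside (fun i hi => hcS i (hi.trans_le find_le)) o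

end IsSymmetricStep

namespace IsDecayingStep

lemma greenDist_le_iff (hμ : IsDecayingStep μ S η ρ) {x y : G} :
    greenDist μ x y ≤ R ↔ ENNReal.ofReal (Real.exp (-R)) ≤ 𝒢[μ] {y}ᶜ x y := by
  have hit_ne_zero : 𝒢[μ] {y}ᶜ x y ≠ 0 := fun h0 => hμ.green_ne_zero x y <| by
    rw [restrictedGreen_univ_eq_mul, h0, zero_mul]
  have hit_ne_top := hμ.green_ne_top {y}ᶜ x y
  rw [ENNReal.ofReal_le_iff_le_toReal hit_ne_top, greenDist,
    hitProb_eq_restrictedGreen hμ.prob.1,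
    ← Real.le_log_iff_exp_le (ENNReal.toReal_pos hit_ne_zero hit_ne_top), neg_le]

lemma greenDist_le_iff_green (hμ : IsDecayingStep μ S η ρ) {x y : G} :
    greenDist μ x y ≤ R ↔
      ENNReal.ofReal (Real.exp (-R)) * 𝒢[μ] univ 1 1 ≤ 𝒢[μ] univ x y := by
  rw [hμ.greenDist_le_iff, restrictedGreen_univ_eq_mul _ x y, hμ.green_self y,
    ENNReal.mul_le_mul_iff_left (hμ.green_ne_zero 1 1) (hμ.green_ne_top univ 1 1)]

lemma exists_greenDist_le (hμ : IsDecayingStep μ S η ρ) (K : ℕ) :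
    ∃ C, 0 < C ∧ ∀ x y, wordLength S (x⁻¹ * y) ≤ K → greenDist μ x y ≤ C := by
  have green_pos := ENNReal.toReal_pos (hμ.green_ne_zero 1 1) (hμ.green_ne_top univ 1 1)
  obtain ⟨C, hC, C_pos⟩ := ((Real.tendsto_exp_neg_atTop_nhds_zero.eventually_lt_const
    (div_pos (pow_pos hμ.pos K) green_pos)).and (eventually_gt_atTop 0)).exists
  refine ⟨C, C_pos, fun x y hxy => hμ.greenDist_le_iff_green.2 ?_⟩
  calc ENNReal.ofReal (Real.exp (-C)) * 𝒢[μ] univ 1 1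
      = ENNReal.ofReal (Real.exp (-C) * (𝒢[μ] univ (1 : G) 1).toReal) := by
        rw [ENNReal.ofReal_mul (Real.exp_pos _).le, ENNReal.ofReal_toReal (hμ.green_ne_top _ _ _)]
    _ ≤ ENNReal.ofReal (η ^ K) := ENNReal.ofReal_le_ofReal ((lt_div_iff₀ green_pos).1 hC).le
    _ ≤ 𝒢[μ] univ x y := hμ.ofReal_pow_le_green hxy

lemma exitLaw_le [Countable G] [MeasurableSpace G] [MeasurableSingletonClass G]
    (hμ : IsDecayingStep μ S η ρ) {P : Measure (ℕ → G)} (hP : IsWalkMeasure μ P) {y : G}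
    (hy : y ∉ greenBall μ R) : exitLaw μ P R y ≤ ENNReal.ofReal (Real.exp (-R)) :=
  calc exitLaw μ P R y = 𝒢[μ] (greenBall μ R) 1 y := exitLaw_eq_restrictedGreen hP hy
    _ ≤ 𝒢[μ] {y}ᶜ 1 y := restrictedGreen_mono _ (subset_compl_singleton_iff.2 hy) 1 y
    _ ≤ ENNReal.ofReal (Real.exp (-R)) := (not_le.1 fun h => hy (hμ.greenDist_le_iff.2 h)).le

lemma one_mem_greenBall (hμ : IsDecayingStep μ S η ρ) (hR : 0 ≤ R) : (1 : G) ∈ greenBall μ R :=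
  hμ.greenDist_le_iff.2 <| (ENNReal.ofReal_le_one.2 (by simpa using hR)).trans
    (one_le_restrictedGreen_self _ _ 1)

lemma exp_neg_le_green_greenBall (hμ : IsDecayingStep μ S η ρ) (hR : 0 ≤ R) {z : G}
    (hz : 2 * (ENNReal.ofReal (Real.exp (-R)) * 𝒢[μ] univ 1 1) ≤ 𝒢[μ] univ 1 z) :
    z ∈ greenBall μ R ∧ ENNReal.ofReal (Real.exp (-R)) ≤ 𝒢[μ] (greenBall μ R) 1 z := by
  have z_mem : z ∈ greenBall μ R := hμ.greenDist_le_iff_green.2 <|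
    (le_mul_of_one_le_left' one_le_two).trans hz
  have outside (v : G) (hv : v ∉ greenBall μ R) :
      𝒢[μ] univ 1 v ≤ ENNReal.ofReal (Real.exp (-R)) * 𝒢[μ] univ 1 1 :=
    (not_le.1 fun h => hv (hμ.greenDist_le_iff_green.2 h)).le
  refine ⟨z_mem, ?_⟩
  rw [restrictedGreen_comm hμ.stepKernel_comm (hμ.one_mem_greenBall hR) z_mem]
  exact (le_mul_of_one_le_right' (one_le_restrictedGreen_self _ _ 1)).trans <|
    le_restrictedGreen_of_two_mul_le hμ.stepKernel_comm (fun x => (hμ.tsum_stepKernel x).le)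
      (hμ.one_mem_greenBall hR) outside
      (ENNReal.mul_ne_top ENNReal.ofReal_ne_top (hμ.green_ne_top univ 1 1)) hz

lemma exists_exp_neg_le_green_near (hμ : IsDecayingStep μ S η ρ)
    (hδ : IsHyperbolicWith (wordDist S) δ) :
    ∃ K : ℕ, ∀ R, 0 ≤ R → ∀ x ∈ greenSphere μ R, ∃ z ∈ greenBall μ R,
      wordLength S (z⁻¹ * x) ≤ K ∧
        ENNReal.ofReal (Real.exp (-R)) ≤ 𝒢[μ] (greenBall μ R) 1 z := by
  obtain ⟨n, K, hK⟩ := hμ.exists_two_mul_green_le hδ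
  refine ⟨n + K + 1, fun R hR x hx => ?_⟩
  obtain ⟨-, x', hx', hS_step⟩ := hμ.mem_greenSphere_iff.1 hx
  have near (z : G) : wordLength S (z⁻¹ * x) ≤ wordLength S (z⁻¹ * x') + 1 :=
    (wordLength_inv_mul_triangle hμ.generates z x' x).trans
      (Nat.add_le_add_left (wordLength_le_one_of_mem hS_step) _)
  rcases le_or_gt n (wordLength S x') with hn | hn
  · obtain ⟨z, hzx', hz⟩ := hK x' hn
    obtain ⟨z_mem, hz_exit⟩ := hμ.exp_neg_le_green_greenBall hR <|
      (mul_le_mul_right (hμ.greenDist_le_iff_green.1 hx') 2).trans hz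
    have := near z
    exact ⟨z, z_mem, by omega, hz_exit⟩
  · have := near 1
    rw [inv_one, one_mul, one_mul] at this
    refine ⟨1, hμ.one_mem_greenBall hR, by simpa using this.trans (by omega), ?_⟩
    exact (ENNReal.ofReal_le_one.2 (by simpa using hR)).trans (one_le_restrictedGreen_self _ _ 1)

theorem exists_le_exitLaw_near [Countable G] [MeasurableSpace G] [MeasurableSingletonClass G]
    (hμ : IsDecayingStep μ S η ρ) (hδ : IsHyperbolicWith (wordDist S) δ) {P : Measure (ℕ → G)}
    (hP : IsWalkMeasure μ P) :
    ∃ K : ℕ, ∀ R, 0 ≤ R → ∀ x ∈ greenSphere μ R, ∃ y ∈ greenSphere μ R,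
      wordLength S (x⁻¹ * y) ≤ K ∧ ENNReal.ofReal (η ^ K * Real.exp (-R)) ≤ exitLaw μ P R y := by
  obtain ⟨K, hK⟩ := hμ.exists_exp_neg_le_green_near hδ
  refine ⟨K, fun R hR x hx => ?_⟩
  obtain ⟨z, z_mem, hzx, hz⟩ := hK R hR x hx
  obtain ⟨y, hy, hy_step, hxy, hzy⟩ := hμ.exists_exit_near z_mem hx.1 1
  refine ⟨y, hμ.mem_greenSphere_iff.2 ⟨hy, hy_step⟩, hxy.trans hzx, ?_⟩
  calc ENNReal.ofReal (η ^ K * Real.exp (-R))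
      = ENNReal.ofReal (Real.exp (-R)) * ENNReal.ofReal η ^ K := by
        rw [mul_comm, ENNReal.ofReal_mul (Real.exp_pos _).le, ENNReal.ofReal_pow hμ.pos.le]
    _ ≤ 𝒢[μ] (greenBall μ R) 1 z * ENNReal.ofReal η ^ wordLength S (z⁻¹ * x) :=
        mul_le_mul' hz (pow_le_pow_right_of_le_one' (ENNReal.ofReal_le_one.2 hμ.le_one) hzx)
    _ ≤ 𝒢[μ] (greenBall μ R) 1 y := hzy
    _ = exitLaw μ P R y := (exitLaw_eq_restrictedGreen hP hy).symm

end IsDecayingStep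

lemma exists_isSymmetricStep (hprob : IsProbDensity μ) (hsymm : IsSymmetric μ)
    (hfin : {g : G | μ g ≠ 0}.Finite) (hgen : GeneratesSupp μ) :
    ∃ (S : Finset G) (η : ℝ), IsSymmetricStep μ S η := by
  have mem_iff (s : G) : s ∈ hfin.toFinset ↔ μ s ≠ 0 := by simp
  have μ_pos (s : G) (hs : s ∈ hfin.toFinset) : 0 < μ s :=
    (hprob.1 s).lt_of_ne' ((mem_iff s).1 hs)
  obtain ⟨η, η_pos, hη⟩ := Order.exists_between_finsets {0} (hfin.toFinset.image μ)
    (by simpa using μ_pos)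
  rw [Finset.forall_mem_image] at hη
  exact ⟨hfin.toFinset, η, hprob, hsymm, by rwa [Generates, hfin.coe_toFinset], mem_iff,
    η_pos 0 (Finset.mem_singleton_self 0), fun s hs => (hη hs).le⟩

lemma IsSymmetricStep.exists_isDecayingStep [Infinite G] {δ : ℝ} (h : IsSymmetricStep μ S η)
    (hδ : IsHyperbolicWith (wordDist S) δ) (hℤ : ¬ QuasiIsometric (wordDist S) intDist) :
    ∃ ρ, IsDecayingStep μ S η ρ := by
  obtain ⟨ρ, ρ_pos, ρ_lt, hρ⟩ := exists_averagingIterate_le_pow h.generates hδ hℤ h.inv_mem_iff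
    h.prob.1 h.symm (fun s hs => h.pos.trans_le (h.le s hs)) h.sum_eq_one
  refine ⟨ρ, h, ρ_pos, ρ_lt, fun n x y => ?_⟩
  rw [h.pathWeight_univ, ← ENNReal.ofReal_pow ρ_pos.le]
  exact ENNReal.ofReal_le_ofReal (hρ n _)

lemma IsHyperbolicWith.mono {X : Type*} {d : X → X → ℝ} {δ δ' : ℝ} (hd : IsHyperbolicWith d δ)
    (hδ : δ ≤ δ') : IsHyperbolicWith d δ' := fun w x y z =>
  (sub_le_sub_left hδ _).trans (hd w x y z)

lemma NonElemHyperbolic.exists_isDecayingStep (hG : NonElemHyperbolic G)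
    (hprob : IsProbDensity μ) (hsymm : IsSymmetric μ) (hfin : {g : G | μ g ≠ 0}.Finite)
    (hgen : GeneratesSupp μ) :
    ∃ (S : Finset G) (η ρ : ℝ) (δ : ℕ),
      IsDecayingStep μ S η ρ ∧ IsHyperbolicWith (wordDist S) δ := by
  have : Infinite G := hG.1
  obtain ⟨S, η, hμ⟩ := exists_isSymmetricStep hprob hsymm hfin hgen
  obtain ⟨⟨δ, -, hδ⟩, hℤ⟩ := hG.2.2 S hμ.generates
  obtain ⟨ρ, hρ⟩ := hμ.exists_isDecayingStep hδ hℤ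
  obtain ⟨d, hd⟩ := exists_nat_ge δ
  exact ⟨S, η, ρ, d, hρ, hδ.mono hd⟩

end ExitLaw

/-- **Proposition 3.9 (escape from Green balls).**  For a finitely supported symmetric
random walk on a non-elementary hyperbolic group, the exit law `ν_R` from Green balls of
radius `R` satisfies `ν_R(y) ≤ e^{-R}` everywhere on the exterior sphere, and every point
`x` of the sphere has a companion `y` at uniformly bounded Green distance with
`ν_R(y) ≥ C₂ e^{-R}`. -/
theorem exit_law_estimates
    {G : Type*} [Group G] [Countable G] [MeasurableSpace G] [MeasurableSingletonClass G]
    (hG : NonElemHyperbolic G)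
    (μ : G → ℝ) (hprob : IsProbDensity μ) (hsymm : IsSymmetric μ)
    (hfin : {g : G | μ g ≠ 0}.Finite) (hgen : GeneratesSupp μ)
    (P : Measure (ℕ → G)) (hP : IsWalkMeasure μ P) :
    (∀ R : ℝ, 0 < R → ∀ y ∈ greenSphere μ R,
        exitLaw μ P R y ≤ ENNReal.ofReal (Real.exp (-R))) ∧
    ∃ C₁ C₂ : ℝ, 0 < C₁ ∧ 0 < C₂ ∧
      ∀ R : ℝ, 0 < R → ∀ x ∈ greenSphere μ R,
        ∃ y ∈ greenSphere μ R, greenDist μ x y ≤ C₁ ∧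
          ENNReal.ofReal (C₂ * Real.exp (-R)) ≤ exitLaw μ P R y ∧
          exitLaw μ P R y ≤ ENNReal.ofReal (Real.exp (-R)) := by
  obtain ⟨S, η, ρ, δ, hμ, hδ⟩ := hG.exists_isDecayingStep hprob hsymm hfin hgen
  obtain ⟨K, hK⟩ := hμ.exists_le_exitLaw_near hδ hP
  obtain ⟨C, C_pos, hC⟩ := hμ.exists_greenDist_le K
  refine ⟨fun R _ y hy => hμ.exitLaw_le hP hy.1, C, η ^ K, C_pos, pow_pos hμ.pos K, ?_⟩
  intro R hR x hx
  obtain ⟨y, hy, hxy, le_exitLaw⟩ := hK R hR.le x hx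
  exact ⟨y, hy, hC x y hxy, le_exitLaw, hμ.exitLaw_le hP hy.1⟩

end GHM
end
end

section
/- Let X be a proper metric space and ν a Borel regular probability measure on X. If for ν-almost every x ∈ X one has lim_{r→0} log ν(B(x,r))/log r = α, then the Hausdorff dimension of ν equals α, where the Hausdorff dimension of a measure is the infimum of the Hausdorff dimensions of sets of full measure. -/
open Filter MeasureTheory Topology Metric Set
open scoped ENNReal

noncomputable section

namespace GHM

variable {G : Type*} [Group G]

/-!
For `d < α`, almost every point satisfies `ν(B(x,r)) ≤ r^d` at all small scales. A set of positive
measure contains a subset of positive measure on which this holds uniformly, and there a set of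
small diameter has mass at most its diameter to the power `d`, so the `d`-dimensional Hausdorff
measure dominates `ν` (mass distribution principle). For `d > α`, almost every point satisfies
`r^d ≤ ν(B(x,r))` at all small scales. Where this holds uniformly, Vitali's lemma yields coverings
by balls `B(x,5r)` with the `B(x,r)` disjoint, and disjointness bounds `∑ (10r)^d` by `10^d` times
the total mass.
-/

theorem exists_iUnion_eq_forall_eventually {X ι : Type*} {l : Filter ι} [l.IsCountablyGenerated]
    {p : X → ι → Prop} {S : Set X} (h : ∀ x ∈ S, ∀ᶠ i in l, p x i) :
    ∃ E : ℕ → Set X, ⋃ n, E n = S ∧ ∀ n, ∀ᶠ i in l, ∀ x ∈ E n, p x i := by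
  obtain ⟨b, hb⟩ := l.exists_antitone_basis
  refine ⟨fun n => {x ∈ S | ∀ i ∈ b n, p x i}, ?_, fun n => ?_⟩
  · refine (iUnion_subset fun n => sep_subset S _).antisymm fun x hx => ?_
    obtain ⟨n, -, hn⟩ := hb.toHasBasis.eventually_iff.1 (h x hx)
    exact mem_iUnion.2 ⟨n, hx, fun i hi => hn hi⟩
  · filter_upwards [hb.mem n] with i hi x hx using hx.2 i hi

theorem exists_countable_cover_ball_tsum_measure_le {X : Type*} [PseudoMetricSpace X]
    [TopologicalSpace.SeparableSpace X] [MeasurableSpace X] [OpensMeasurableSpace X]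
    (μ : Measure X) (S : Set X) {r : ℝ} (hr : 0 < r) :
    ∃ u ⊆ S, u.Countable ∧ S ⊆ ⋃ x : u, ball (x : X) (5 * r) ∧
      ∑' x : u, μ (ball (x : X) r) ≤ μ univ := by
  obtain ⟨u, huS, hdisj, hcover⟩ :=
    Vitali.exists_disjoint_subfamily_covering_enlargement_ball S id (fun _ => r) r
      (fun _ _ => le_rfl) 5 (by norm_num)
  refine ⟨u, huS, hdisj.countable_of_isOpen (fun _ _ => isOpen_ball)
    fun x _ => ⟨x, mem_ball_self hr⟩, fun x hx => ?_, ?_⟩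
  · obtain ⟨y, hy, hxy⟩ := hcover x hx
    exact mem_iUnion.2 ⟨⟨y, hy⟩, hxy (mem_ball_self hr)⟩
  · exact (tsum_meas_le_meas_iUnion_of_disjoint μ (fun _ => measurableSet_ball)
      (hdisj.subtype _ _)).trans (measure_mono (subset_univ _))

section HausdorffMeasure

variable {X : Type*} [MetricSpace X] [MeasurableSpace X] [BorelSpace X]

theorem hausdorffMeasure_le_of_eventually_rpow_le_measure_ball
    [TopologicalSpace.SeparableSpace X] (μ : Measure X) {d : ℝ} (hd : 0 ≤ d) {S : Set X}
    (h : ∀ᶠ r in 𝓝[>] (0 : ℝ), ∀ x ∈ S, ENNReal.ofReal r ^ d ≤ μ (ball x r)) :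
    μH[d] S ≤ 10 ^ d * μ univ := by
  let r : ℕ → ℝ := fun n => 1 / ((n : ℝ) + 1)
  have r_pos (n : ℕ) : 0 < r n := Nat.one_div_pos_of_nat
  have r_tendsto : Tendsto r atTop (𝓝 0) := tendsto_one_div_add_atTop_nhds_zero_nat
  choose u huS hu_count hu_cover hu_sum using
    fun n => exists_countable_cover_ball_tsum_measure_le μ S (r_pos n)
  have (n : ℕ) : Countable (u n) := (hu_count n).to_subtype
  have ediam_le (n : ℕ) (x : X) : ediam (ball x (5 * r n)) ≤ 10 * ENNReal.ofReal (r n) := by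
    rw [← eball_ofReal, ENNReal.ofReal_mul (by norm_num), ENNReal.ofReal_ofNat]
    exact ediam_eball_le.trans_eq (by rw [← mul_assoc]; norm_num)
  have tendsto_zero : Tendsto (fun n => 10 * ENNReal.ofReal (r n)) atTop (𝓝 0) := by
    simpa using ENNReal.Tendsto.const_mul (ENNReal.tendsto_ofReal r_tendsto) (a := 10) (by simp)
  have sum_le : ∀ᶠ n in atTop,
      ∑' x : u n, ediam (ball (x : X) (5 * r n)) ^ d ≤ 10 ^ d * μ univ := by
    filter_upwards [(tendsto_nhdsWithin_iff.2 ⟨r_tendsto, .of_forall r_pos⟩).eventually h]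
      with n hn
    calc ∑' x : u n, ediam (ball (x : X) (5 * r n)) ^ d
        ≤ ∑' x : u n, 10 ^ d * μ (ball (x : X) (r n)) := by
          refine ENNReal.tsum_le_tsum fun x => ?_
          grw [ediam_le, ENNReal.mul_rpow_of_nonneg _ _ hd, hn x (huS n x.2)]
      _ = 10 ^ d * ∑' x : u n, μ (ball (x : X) (r n)) := ENNReal.tsum_mul_left
      _ ≤ 10 ^ d * μ univ := by grw [hu_sum n]
  calc μH[d] S ≤ liminf (fun n => ∑' x : u n, ediam (ball (x : X) (5 * r n)) ^ d) atTop :=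
        Measure.hausdorffMeasure_le_liminf_tsum d S _ tendsto_zero _
          (.of_forall fun n x => ediam_le n x) (.of_forall hu_cover)
    _ ≤ 10 ^ d * μ univ := liminf_le_of_frequently_le' sum_le.frequently

theorem restrict_le_hausdorffMeasure_of_eventually_measure_ball_le
    (μ : Measure X) (d : ℝ) {S : Set X}
    (h : ∀ᶠ r in 𝓝[>] (0 : ℝ), ∀ x ∈ S, μ (ball x r) ≤ ENNReal.ofReal r ^ d) :
    μ.restrict S ≤ μH[d] := by
  obtain ⟨δ, hδ : 0 < δ, h⟩ := mem_nhdsGT_iff_exists_Ioo_subset.1 h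
  refine Measure.le_hausdorffMeasure d _ (ENNReal.ofReal (δ / 2)) (by simpa using hδ)
    fun s hs => ?_
  have ediam_ne_top : ediam s ≠ ∞ := ne_top_of_le_ne_top ENNReal.ofReal_ne_top hs
  have diam_lt : diam s < δ :=
    (ENNReal.toReal_le_of_le_ofReal (by positivity) hs).trans_lt (half_lt_self hδ)
  -- `S` need not be measurable, so `s` is replaced by its closure, of the same diameter.
  have restrict_le : μ.restrict S s ≤ μ (closure s ∩ S) :=
    (measure_mono subset_closure).trans_eq (Measure.restrict_apply measurableSet_closure)
  refine restrict_le.trans ?_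
  obtain hempty | ⟨x, hxs, hxS⟩ := (closure s ∩ S).eq_empty_or_nonempty
  · simp [hempty]
  have measure_le : ∀ᶠ r in 𝓝[>] (diam s), μ (closure s ∩ S) ≤ ENNReal.ofReal r ^ d := by
    filter_upwards [Ioo_mem_nhdsGT diam_lt] with r ⟨hr, hrδ⟩
    refine (measure_mono fun y hy => ?_).trans (h ⟨diam_nonneg.trans_lt hr, hrδ⟩ x hxS)
    have hbdd : Bornology.IsBounded (closure s) :=
      (isBounded_iff_ediam_ne_top.2 ediam_ne_top).closure
    exact (dist_le_diam_of_mem hbdd hy.1 hxs).trans_lt (by rwa [diam_closure])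
  have rpow_tendsto : Tendsto (fun r : ℝ => ENNReal.ofReal r ^ d) (𝓝[>] (diam s))
      (𝓝 (ediam s ^ d)) := by
    have rpow_continuous : Continuous fun r : ℝ => ENNReal.ofReal r ^ d :=
      ENNReal.continuous_rpow_const.comp ENNReal.continuous_ofReal
    simpa only [diam, ENNReal.ofReal_toReal ediam_ne_top] using
      (rpow_continuous.tendsto (diam s)).mono_left nhdsWithin_le_nhds
  exact ge_of_tendsto rpow_tendsto measure_le

theorem dimH_le_of_eventually_rpow_le_measure_ball [SecondCountableTopology X]
    (μ : Measure X) [IsLocallyFiniteMeasure μ] {d : NNReal} {S : Set X}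
    (h : ∀ x ∈ S, ∀ᶠ r in 𝓝[>] (0 : ℝ), ENNReal.ofReal r ^ (d : ℝ) ≤ μ (ball x r)) :
    dimH S ≤ d := by
  let U := μ.finiteSpanningSetsInOpen'
  have inter_le (k : ℕ) : dimH (S ∩ U.set k) ≤ d := by
    have h_restrict : ∀ x ∈ S ∩ U.set k, ∀ᶠ r in 𝓝[>] (0 : ℝ),
        ENNReal.ofReal r ^ (d : ℝ) ≤ μ.restrict (U.set k) (ball x r) := by
      rintro x ⟨hxS, hxU⟩
      filter_upwards [h x hxS, (eventually_ball_subset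
        ((U.set_mem k).mem_nhds hxU)).filter_mono nhdsWithin_le_nhds] with r hr hrU
      rwa [Measure.restrict_eq_self μ hrU]
    obtain ⟨E, hE_union, hE⟩ := exists_iUnion_eq_forall_eventually h_restrict
    rw [← hE_union, dimH_iUnion]
    refine iSup_le fun n => dimH_le_of_hausdorffMeasure_ne_top <| ne_top_of_le_ne_top ?_
      (hausdorffMeasure_le_of_eventually_rpow_le_measure_ball _ d.coe_nonneg (hE n))
    rw [Measure.restrict_apply_univ]
    exact ENNReal.mul_ne_top (by finiteness) (U.finite k).ne
  calc dimH S = ⨆ k, dimH (S ∩ U.set k) := by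
        rw [← dimH_iUnion, ← inter_iUnion, U.spanning, inter_univ]
    _ ≤ d := iSup_le inter_le

theorem le_dimH_of_eventually_measure_ball_le
    (μ : Measure X) {d : NNReal} {S : Set X} (hS : μ S ≠ 0)
    (h : ∀ x ∈ S, ∀ᶠ r in 𝓝[>] (0 : ℝ), μ (ball x r) ≤ ENNReal.ofReal r ^ (d : ℝ)) :
    d ≤ dimH S := by
  obtain ⟨E, rfl, hE⟩ := exists_iUnion_eq_forall_eventually h
  obtain ⟨n, hn⟩ : ∃ n, μ (E n) ≠ 0 := by
    contrapose! hS
    exact measure_iUnion_null hS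
  have hausdorff_ne_zero : μH[(d : ℝ)] (E n) ≠ 0 := fun h_zero => hn <| by
    rw [← Measure.restrict_apply_self, ← nonpos_iff_eq_zero, ← h_zero]
    exact restrict_le_hausdorffMeasure_of_eventually_measure_ball_le μ d (hE n) (E n)
  exact (le_dimH_of_hausdorffMeasure_ne_zero hausdorff_ne_zero).trans
    (dimH_mono (subset_iUnion E n))

theorem measureDim_le_of_ae_eventually_rpow_le_measure_ball [SecondCountableTopology X]
    (μ : Measure X) [IsLocallyFiniteMeasure μ] {d : NNReal}
    (h : ∀ᵐ x ∂μ, ∀ᶠ r in 𝓝[>] (0 : ℝ), ENNReal.ofReal r ^ (d : ℝ) ≤ μ (ball x r)) :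
    measureDim μ ≤ d :=
  iInf₂_le_of_le _ h (dimH_le_of_eventually_rpow_le_measure_ball μ fun _ hx => hx)

theorem le_measureDim_of_ae_eventually_measure_ball_le
    (μ : Measure X) [NeZero μ] {d : NNReal}
    (h : ∀ᵐ x ∂μ, ∀ᶠ r in 𝓝[>] (0 : ℝ), μ (ball x r) ≤ ENNReal.ofReal r ^ (d : ℝ)) :
    d ≤ measureDim μ := by
  refine le_iInf₂ fun A hA => ?_
  have hA_ae : ∀ᵐ x ∂μ, x ∈ A := mem_ae_iff.2 hA
  have good_ne_zero :
      μ {x ∈ A | ∀ᶠ r in 𝓝[>] (0 : ℝ), μ (ball x r) ≤ ENNReal.ofReal r ^ (d : ℝ)} ≠ 0 :=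
    frequently_ae_iff.1 (hA_ae.and h).frequently
  calc (d : ℝ≥0∞) ≤ dimH _ :=
        le_dimH_of_eventually_measure_ball_le μ good_ne_zero fun _ hx => hx.2
    _ ≤ dimH A := dimH_mono (sep_subset A _)

end HausdorffMeasure

section PointwiseDimension

/-- The pointwise dimension of `μ` at `x` exists and equals `α`. Since `Real.log 0 = 0` and
`ENNReal.toReal ∞ = 0`, this is meaningful only if the small balls around `x` have positive and
finite measure. -/
def HasPointwiseDim {X : Type*} [PseudoMetricSpace X] [MeasurableSpace X] (μ : Measure X)
    (x : X) (α : ℝ) : Prop :=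
  Tendsto (fun r : ℝ => Real.log (μ (ball x r)).toReal / Real.log r) (𝓝[>] (0 : ℝ)) (𝓝 α)

variable {X : Type*} [PseudoMetricSpace X] [MeasurableSpace X] {μ : Measure X}
  [IsLocallyFiniteMeasure μ] {x : X} {α d : ℝ}

theorem eventually_measure_ball_ne_top (μ : Measure X) [IsLocallyFiniteMeasure μ] (x : X) :
    ∀ᶠ r in 𝓝[>] (0 : ℝ), μ (ball x r) ≠ ∞ := by
  obtain ⟨U, hU, hU_finite⟩ := μ.finiteAt_nhds x
  filter_upwards [(eventually_ball_subset hU).filter_mono nhdsWithin_le_nhds] with r hr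
  exact measure_ne_top_of_subset hr hU_finite.ne

theorem eventually_toReal_measure_ball_pos (hx : x ∈ μ.support) :
    ∀ᶠ r in 𝓝[>] (0 : ℝ), 0 < (μ (ball x r)).toReal := by
  filter_upwards [eventually_measure_ball_ne_top μ x, self_mem_nhdsWithin] with r h_top hr
  exact ENNReal.toReal_pos
    ((Measure.mem_support_iff_forall x).1 hx _ (ball_mem_nhds x hr)).ne' h_top

theorem HasPointwiseDim.eventually_rpow_le_measure_ball (h : HasPointwiseDim μ x α)
    (hx : x ∈ μ.support) (hd : α < d) :
    ∀ᶠ r in 𝓝[>] (0 : ℝ), ENNReal.ofReal r ^ d ≤ μ (ball x r) := by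
  filter_upwards [h.eventually_lt_const hd, eventually_toReal_measure_ball_pos hx,
    Ioo_mem_nhdsGT one_pos] with r h_log h_pos ⟨hr₀, hr₁⟩
  rw [Real.log_div_log, Real.logb_lt_iff_lt_rpow_of_base_lt_one hr₀ hr₁ h_pos] at h_log
  rw [ENNReal.ofReal_rpow_of_pos hr₀]
  exact ENNReal.ofReal_le_of_le_toReal h_log.le

theorem HasPointwiseDim.eventually_measure_ball_le_rpow (h : HasPointwiseDim μ x α)
    (hx : x ∈ μ.support) (hd : d < α) :
    ∀ᶠ r in 𝓝[>] (0 : ℝ), μ (ball x r) ≤ ENNReal.ofReal r ^ d := by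
  filter_upwards [h.eventually_const_lt hd, eventually_toReal_measure_ball_pos hx,
    eventually_measure_ball_ne_top μ x, Ioo_mem_nhdsGT one_pos]
    with r h_log h_pos h_top ⟨hr₀, hr₁⟩
  rw [Real.log_div_log, Real.lt_logb_iff_rpow_lt_of_base_lt_one hr₀ hr₁ h_pos] at h_log
  rw [ENNReal.ofReal_rpow_of_pos hr₀]
  exact (ENNReal.le_ofReal_iff_toReal_le h_top (by positivity)).2 h_log.le

end PointwiseDimension

theorem dimension_from_pointwise_dimension_general
    {X : Type*} [MetricSpace X] [SecondCountableTopology X] [MeasurableSpace X] [BorelSpace X]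
    (ν : Measure X) [IsLocallyFiniteMeasure ν] [NeZero ν] (α : ℝ)
    (hdim : ∀ᵐ x ∂ν, HasPointwiseDim ν x α) :
    measureDim ν = ENNReal.ofReal α := by
  have hsupp : ∀ᵐ x ∂ν, x ∈ ν.support := Measure.support_mem_ae
  refine le_antisymm (le_of_forall_gt_imp_ge_of_dense fun b hb => ?_)
    (ENNReal.le_of_forall_nnreal_lt fun d hd => ?_)
  · obtain ⟨d, hαd, hdb⟩ := ENNReal.lt_iff_exists_nnreal_btwn.1 hb
    have hα : α < d := by
      contrapose! hαd
      simpa only [ENNReal.ofReal_coe_nnreal] using ENNReal.ofReal_le_ofReal hαd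
    refine (measureDim_le_of_ae_eventually_rpow_le_measure_ball ν ?_).trans hdb.le
    filter_upwards [hdim, hsupp] with x hx hx_supp
    exact hx.eventually_rpow_le_measure_ball hx_supp hα
  · apply le_measureDim_of_ae_eventually_measure_ball_le
    filter_upwards [hdim, hsupp] with x hx hx_supp
    exact hx.eventually_measure_ball_le_rpow hx_supp (ENNReal.coe_lt_ofReal.1 hd)

/-- **Proposition 4.2.**  Let `X` be a proper metric space and `ν` a Borel (regular)
probability measure on `X`.  If for `ν`-almost every `x` the pointwise dimension
`lim_{r→0} log ν(B(x,r))/log r` equals `α`, then the Hausdorff dimension of `ν` (the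
infimum of Hausdorff dimensions of sets of full measure) equals `α`. -/
theorem dimension_from_pointwise_dimension
    {X : Type*} [MetricSpace X] [ProperSpace X] [MeasurableSpace X] [BorelSpace X]
    (ν : Measure X) [IsProbabilityMeasure ν] (α : ℝ)
    (hdim : ∀ᵐ x ∂ν,
      Tendsto (fun r : ℝ => Real.log (ν (Metric.ball x r)).toReal / Real.log r)
        (𝓝[>] (0 : ℝ)) (𝓝 α)) :
    measureDim ν = ENNReal.ofReal α :=
  dimension_from_pointwise_dimension_general ν α hdim

end GHM
end
end
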